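/- arXiv:1910.06533 — 3 statements merged into one kernel-verified Lean document; each statement's English description precedes it below -/
import Mathlib

section
/- (Corollary 1.3) Let C := c(I). Suppose C has no symmetries, i.e. the only isometry T of ℝ³ with T(C) = C is the identity map. Then, for ε > 0 sufficiently small and for any δ ∈ (0, ε], the image φ_f(Ω_δ) is not congruent to any subset of ψ_f(Ω_ε): there is no isometry T of ℝ³ with T(φ_f(Ω_δ)) ⊆ ψ_f(Ω_ε), where Ω_δ := I × (−δ, δ). -/
noncomputable section
open Real Set
open scoped ContDiff

local notation "⟪" x ", " y "⟫" => @inner ℝ _ _ x y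

/-- Euclidean 3-space. -/
abbrev E3 := EuclideanSpace ℝ (Fin 3)

/-- The vector (cross) product of `ℝ³`. -/
def cross3 (u v : E3) : E3 :=
  (WithLp.equiv 2 (Fin 3 → ℝ)).symm
    ![u 1 * v 2 - u 2 * v 1, u 2 * v 0 - u 0 * v 2, u 0 * v 1 - u 1 * v 0]

open Filter Topology in
theorem aux_core (G : ℝ × ℝ × ℝ → E3) (V : Set (ℝ × ℝ × ℝ)) (hVo : IsOpen V) (hinj : InjOn G V)
    (hder : ∀ q ∈ V, ∃ L : (ℝ × ℝ × ℝ) ≃L[ℝ] E3,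
      HasStrictFDerivAt G (L : (ℝ × ℝ × ℝ) →L[ℝ] E3) q)
    (A : Set (ℝ × ℝ × ℝ)) (hA : A ⊆ V) (j : (ℝ × ℝ × ℝ) →L[ℝ] ℝ) (hj : j ≠ 0)
    (q : ℝ × ℝ × ℝ) (hq : q ∈ V) (hjA : ∀ᶠ r in 𝓝 q, r ∈ A → j r = 0)
    (T : E3 ≃ᵢ E3) (q0 : ℝ × ℝ × ℝ) (hq0 : q0 ∈ V) (hT : T (G q0) = G q)
    (B : Set (ℝ × ℝ × ℝ)) (hB : ∀ r ∈ B, T (G r) ∈ G '' A) :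
    ∃ M : (ℝ × ℝ × ℝ) →L[ℝ] ℝ, M ≠ 0 ∧ ∃ k : ℝ × ℝ × ℝ → ℝ, HasFDerivAt k M q0 ∧
      ∀ᶠ r in 𝓝 q0, r ∈ B → k r = 0 := by
  obtain ⟨L, hL⟩ := hder q hq
  obtain ⟨L0, hL0⟩ := hder q0 hq0
  set h := hL.localInverse with hh
  have hd : HasFDerivAt h (L.symm : E3 →L[ℝ] (ℝ × ℝ × ℝ)) (G q) := hL.to_localInverse.hasFDerivAt
  have hTd : HasFDerivAt T
      (T.toRealAffineIsometryEquiv.linearIsometryEquiv.toContinuousLinearEquiv : E3 →L[ℝ] E3)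
      (G q0) := by
    have h1 : (T : E3 → E3) = fun x =>
        T.toRealAffineIsometryEquiv.linearIsometryEquiv.toContinuousLinearEquiv x + T 0 := by
      funext x
      have := T.toRealAffineIsometryEquiv.map_vadd 0 x
      simpa using this
    rw [h1]
    exact ((T.toRealAffineIsometryEquiv.linearIsometryEquiv.toContinuousLinearEquiv
      : E3 →L[ℝ] E3).hasFDerivAt).add_const _
  set N := T.toRealAffineIsometryEquiv.linearIsometryEquiv.toContinuousLinearEquiv
  have hd' : HasFDerivAt h (L.symm : E3 →L[ℝ] (ℝ × ℝ × ℝ)) (T (G q0)) := by rw [hT]; exact hd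
  have hcomp := (hd'.comp (G q0) hTd).comp q0 hL0.hasFDerivAt
  refine ⟨_, ?_, _, j.hasFDerivAt.comp q0 hcomp, ?_⟩
  · intro h0
    apply hj
    refine ContinuousLinearMap.ext fun v => ?_
    have := congrArg (fun m : (ℝ × ℝ × ℝ) →L[ℝ] ℝ => m (L0.symm (N.symm (L v)))) h0
    simpa using this
  · have hcont : Tendsto (fun r => T (G r)) (𝓝 q0) (𝓝 (G q)) := by
      rw [← hT]
      exact (T.continuous.continuousAt.comp hL0.hasFDerivAt.continuousAt)
    have e1 := hcont.eventually hL.eventually_right_inverse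
    have e2 := hcont.eventually (hL.localInverse_tendsto.eventually (hVo.mem_nhds hq))
    have e3 := hcont.eventually (hL.localInverse_tendsto.eventually hjA)
    filter_upwards [e1, e2, e3] with r h1 h2 h3 hr
    obtain ⟨z, hz, hz'⟩ := hB r hr
    have : hL.localInverse G L q (T (G r)) = z := by
      apply hinj h2 (hA hz)
      rw [h1, hz']
    show j (h (T (G r))) = 0
    apply h3
    rw [this]; exact hz

open Filter Topology in
theorem aux_curve (k : ℝ × ℝ × ℝ → ℝ) (M : (ℝ × ℝ × ℝ) →L[ℝ] ℝ) (q0 : ℝ × ℝ × ℝ)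
    (hk : HasFDerivAt k M q0) (B : Set (ℝ × ℝ × ℝ)) (hB : ∀ᶠ r in 𝓝 q0, r ∈ B → k r = 0)
    (γ : ℝ → ℝ × ℝ × ℝ) (s0 : ℝ) (hγ0 : γ s0 = q0) (w : ℝ × ℝ × ℝ) (hγ : HasDerivAt γ w s0)
    (S : Set ℝ) (hS : UniqueDiffWithinAt ℝ S s0) (hs0 : s0 ∈ S)
    (hγB : ∀ᶠ s in 𝓝[S] s0, γ s ∈ B) : M w = 0 := by
  subst hγ0
  have h1 : HasDerivWithinAt (k ∘ γ) (M w) S s0 := (hk.comp_hasDerivAt s0 hγ).hasDerivWithinAt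
  have e : (k ∘ γ) =ᶠ[𝓝[S] s0] fun _ => 0 := by
    have := (hγ.continuousAt.continuousWithinAt (s := S)).eventually hB
    filter_upwards [this, hγB] with s a b using a b
  have h2 : HasDerivWithinAt (k ∘ γ) 0 S s0 :=
    (hasDerivWithinAt_const s0 S (0:ℝ)).congr_of_eventuallyEq e (e.self_of_nhdsWithin hs0)
  exact hS.eq_deriv S h1 h2

open Filter Topology in
theorem aux_compact (K : Set E3) (hK : IsCompact K) (T : E3 ≃ᵢ E3) (h : T '' K ⊆ K) :
    T '' K = K := by
  refine subset_antisymm h fun x hx => ?_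
  by_contra hxn
  have hcl : IsClosed (T '' K) := (hK.image T.continuous).isClosed
  obtain ⟨d, hd, hball⟩ := Metric.isOpen_iff.1 hcl.isOpen_compl x hxn
  have hmem : ∀ n : ℕ, (T^[n]) x ∈ K := by
    intro n
    induction n with
    | zero => exact hx
    | succ n ih => rw [Function.iterate_succ_apply']; exact h ⟨_, ih, rfl⟩
  have hiso : ∀ n : ℕ, Isometry (T^[n]) := by
    intro n
    induction n with
    | zero => exact isometry_id
    | succ n ih => rw [Function.iterate_succ']; exact T.isometry.comp ih
  have hdist : ∀ m n : ℕ, m < n → d ≤ dist ((T^[n]) x) ((T^[m]) x) := by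
    intro m n hmn
    obtain ⟨r, rfl⟩ := Nat.exists_eq_add_of_lt hmn
    rw [show m + r + 1 = m + (r + 1) by ring, Function.iterate_add_apply, (hiso m).dist_eq]
    by_contra hlt
    push Not at hlt
    exact hball hlt ⟨(T^[r]) x, hmem r, (Function.iterate_succ_apply' _ _ _).symm⟩
  obtain ⟨y, -, g, hg, hlim⟩ := hK.tendsto_subseq hmem
  obtain ⟨N, hN⟩ := Metric.cauchySeq_iff'.1 hlim.cauchySeq d hd
  have h1 := hN (N + 1) (by omega)
  have h2 := hdist _ _ (hg (Nat.lt_succ_self N))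
  exact absurd h1 (not_lt.2 h2)

open Filter Topology in
/-- A tubular chart around the curve. -/
theorem aux_tube (a b : ℝ) (c z zc : ℝ → E3) (hinj : InjOn c (Icc a b))
    (hc : ∀ t ∈ Icc a b, ContDiffAt ℝ 1 c t) (hz : ∀ t ∈ Icc a b, ContDiffAt ℝ 1 z t)
    (hzc : ∀ t ∈ Icc a b, ContDiffAt ℝ 1 zc t)
    (hli : ∀ t ∈ Icc a b, ∀ r x y : ℝ, r • deriv c t + x • zc t - y • z t = 0 →
      r = 0 ∧ x = 0 ∧ y = 0) :
    ∃ V : Set (ℝ × ℝ × ℝ), IsOpen V ∧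
      InjOn (fun q : ℝ × ℝ × ℝ => c q.1 + q.2.1 • zc q.1 - q.2.2 • z q.1) V ∧
      (∀ q ∈ V, ∃ L : (ℝ × ℝ × ℝ) ≃L[ℝ] E3,
        HasStrictFDerivAt (fun q : ℝ × ℝ × ℝ => c q.1 + q.2.1 • zc q.1 - q.2.2 • z q.1)
          (L : (ℝ × ℝ × ℝ) →L[ℝ] E3) q) ∧
      ∃ ε > 0, ∀ t ∈ Icc a b, ∀ x y, |x| < ε → |y| < ε → (t, x, y) ∈ V := by
  set G : ℝ × ℝ × ℝ → E3 := fun q => c q.1 + q.2.1 • zc q.1 - q.2.2 • z q.1 with hG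
  set K : Set (ℝ × ℝ × ℝ) := (fun t => (t, 0, 0)) '' Icc a b with hK
  have hKc : IsCompact K := isCompact_Icc.image (by fun_prop)
  have hcd : ∀ q ∈ K, ContDiffAt ℝ 1 G q := by
    rintro _ ⟨t, ht, rfl⟩
    have h1 : ContDiffAt ℝ 1 (fun q : ℝ × ℝ × ℝ => q.1) (t, 0, 0) := contDiffAt_fst
    have h2 : ContDiffAt ℝ 1 (fun q : ℝ × ℝ × ℝ => q.2.1) (t, 0, 0) := by fun_prop
    have h3 : ContDiffAt ℝ 1 (fun q : ℝ × ℝ × ℝ => q.2.2) (t, 0, 0) := by fun_prop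
    exact (((hc t ht).comp (t, 0, 0) h1).add (h2.smul ((hzc t ht).comp (t, 0, 0) h1))).sub
      (h3.smul ((hz t ht).comp (t, 0, 0) h1))
  set W : Set (ℝ × ℝ × ℝ) := {q | ∃ L : (ℝ × ℝ × ℝ) ≃L[ℝ] E3,
        HasStrictFDerivAt G (L : (ℝ × ℝ × ℝ) →L[ℝ] E3) q} with hW
  have hWn : ∀ q ∈ K, W ∈ 𝓝 q := by
    intro q hq
    have hd := hcd q hq
    have hL : ∃ L : (ℝ × ℝ × ℝ) ≃L[ℝ] E3, (L : (ℝ × ℝ × ℝ) →L[ℝ] E3) = fderiv ℝ G q := by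
      obtain ⟨t, ht, rfl⟩ := hq
      have h1 : HasFDerivAt (fun q : ℝ × ℝ × ℝ => q.1)
        (ContinuousLinearMap.fst ℝ ℝ (ℝ × ℝ)) (t, 0, 0) := hasFDerivAt_fst
      have h2 : HasFDerivAt (fun q : ℝ × ℝ × ℝ => q.2.1)
        ((ContinuousLinearMap.fst ℝ ℝ ℝ).comp (ContinuousLinearMap.snd ℝ ℝ (ℝ × ℝ))) (t, 0, 0) :=
        (hasFDerivAt_fst (𝕜 := ℝ) (E := ℝ) (F := ℝ)).comp (t, (0:ℝ), (0:ℝ)) hasFDerivAt_snd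
      have h3 : HasFDerivAt (fun q : ℝ × ℝ × ℝ => q.2.2)
        ((ContinuousLinearMap.snd ℝ ℝ ℝ).comp (ContinuousLinearMap.snd ℝ ℝ (ℝ × ℝ))) (t, 0, 0) :=
        (hasFDerivAt_snd (𝕜 := ℝ) (E := ℝ) (F := ℝ)).comp (t, (0:ℝ), (0:ℝ)) hasFDerivAt_snd
      have c1 := (((hc t ht).differentiableAt one_ne_zero).hasDerivAt.hasFDerivAt).comp
        (t, (0:ℝ), (0:ℝ)) h1
      have c2 := (((hzc t ht).differentiableAt one_ne_zero).hasDerivAt.hasFDerivAt).comp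
        (t, (0:ℝ), (0:ℝ)) h1
      have c3 := (((hz t ht).differentiableAt one_ne_zero).hasDerivAt.hasFDerivAt).comp
        (t, (0:ℝ), (0:ℝ)) h1
      have hGd : HasFDerivAt G _ (t, 0, 0) := (c1.add (h2.smul c2)).sub (h3.smul c3)
      rw [hGd.fderiv]
      set D : (ℝ × ℝ × ℝ) →L[ℝ] E3 := _
      change ∃ L : (ℝ × ℝ × ℝ) ≃L[ℝ] E3, (L : (ℝ × ℝ × ℝ) →L[ℝ] E3) = D
      have hDi : Function.Injective D := by
        rw [injective_iff_map_eq_zero]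
        rintro ⟨r, x, y⟩ h0
        have := hli t ht r x y (by simpa [D] using h0)
        simp [this]
      have hfr : Module.finrank ℝ (ℝ × ℝ × ℝ) = Module.finrank ℝ E3 := by simp
      refine ⟨(LinearEquiv.ofInjectiveOfFinrankEq (D : (ℝ × ℝ × ℝ) →ₗ[ℝ] E3) hDi hfr).toContinuousLinearEquiv, ?_⟩
      refine ContinuousLinearMap.ext fun v => ?_
      rfl
    obtain ⟨L, hL⟩ := hL
    have hcont : ContinuousAt (fderiv ℝ G) q := (hd.fderiv_right (m := 0) (by norm_num)).continuousAt
    have e1 := hcont.eventually (by rw [← hL]; exact L.nhds)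
    have e2 := hd.eventually (by simp)
    filter_upwards [e1, e2] with r h1 h2
    obtain ⟨L', hL'⟩ := h1
    exact ⟨L', by rw [hL']; exact h2.hasStrictFDerivAt one_ne_zero⟩
  have hGi : InjOn G K := by
    rintro _ ⟨t, ht, rfl⟩ _ ⟨t', ht', rfl⟩ h
    have : t = t' := hinj ht ht' (by simpa [hG] using h)
    rw [this]
  obtain ⟨V0, hV0, hV0i⟩ := hGi.exists_mem_nhdsSet hKc (fun q hq => (hcd q hq).continuousAt) (by
    intro q hq
    obtain ⟨L, hL⟩ : q ∈ W := mem_of_mem_nhds (hWn q hq)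
    exact ⟨_, (hL.toOpenPartialHomeomorph G).open_source.mem_nhds hL.mem_toOpenPartialHomeomorph_source,
      (hL.toOpenPartialHomeomorph G).injOn⟩)
  have hWK : W ∈ 𝓝ˢ K := mem_nhdsSet_iff_forall.2 hWn
  obtain ⟨V, hVo, hKV, hV⟩ := mem_nhdsSet_iff_exists.1 (Filter.inter_mem hV0 hWK)
  refine ⟨V, hVo, hV0i.mono fun x hx => (hV hx).1, fun q hq => (hV hq).2, ?_⟩
  obtain ⟨ε, hε, hεV⟩ := hKc.exists_thickening_subset_open hVo hKV
  refine ⟨ε, hε, fun t ht x y hx hy => hεV ?_⟩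
  rw [Metric.mem_thickening_iff]
  refine ⟨(t, 0, 0), ⟨t, ht, rfl⟩, ?_⟩
  simp [Prod.dist_eq, hx, hy]

open Filter Topology in
theorem aux_final (a b : ℝ) (hab : a < b) (G : ℝ × ℝ × ℝ → E3) (V : Set (ℝ × ℝ × ℝ))
    (hVo : IsOpen V) (hinj : InjOn G V)
    (hder : ∀ q ∈ V, ∃ L : (ℝ × ℝ × ℝ) ≃L[ℝ] E3,
      HasStrictFDerivAt G (L : (ℝ × ℝ × ℝ) →L[ℝ] E3) q)
    (ε : ℝ) (hε : 0 < ε)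
    (hV : ∀ t ∈ Icc a b, ∀ x y, |x| < ε → |y| < ε → (t, x, y) ∈ V)
    (hsym : ∀ T : E3 ≃ᵢ E3, T '' ((fun t => G (t, 0, 0)) '' Icc a b) =
      (fun t => G (t, 0, 0)) '' Icc a b → ∀ x, T x = x)
    (p r : ℝ → ℝ) (hp : ∀ t ∈ Icc a b, 0 < p t ∧ p t ≤ ε) (hr : ∀ t ∈ Icc a b, 0 < r t)
    (A B : Set (ℝ × ℝ × ℝ))
    (hA : A = {q | q.1 ∈ Icc a b ∧ (0 ≤ q.2.1 ∧ q.2.1 < ε) ∧ (0 ≤ q.2.2 ∧ q.2.2 < ε) ∧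
      (q.2.1 = 0 ∨ q.2.2 = 0)})
    (hB : B = {q | q.1 ∈ Icc a b ∧ ((q.2.1 = 0 ∧ q.2.2 ≤ 0 ∧ -q.2.2 < p q.1) ∨
      (q.2.2 = 0 ∧ q.2.1 ≤ 0 ∧ -q.2.1 < r q.1))})
    (T : E3 ≃ᵢ E3) (hT : ∀ q ∈ B, T (G q) ∈ G '' A) : False := by
  have hAV : A ⊆ V := by
    rintro ⟨t, x, y⟩ h
    rw [hA] at h
    obtain ⟨ht, ⟨hx, hx'⟩, ⟨hy, hy'⟩, -⟩ := h
    exact hV t ht x y (by rwa [abs_of_nonneg hx]) (by rwa [abs_of_nonneg hy])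
  have h0V : ∀ t ∈ Icc a b, (t, (0:ℝ), (0:ℝ)) ∈ V := fun t ht =>
    hV t ht 0 0 (by simpa) (by simpa)
  have h0B : ∀ t ∈ Icc a b, (t, (0:ℝ), (0:ℝ)) ∈ B := fun t ht => by
    rw [hB]; exact ⟨ht, Or.inl ⟨rfl, le_rfl, by simpa using (hp t ht).1⟩⟩
  -- no nonzero functional can vanish
  have key : ∀ t ∈ Icc a b, ∀ q ∈ V, ∀ j : (ℝ × ℝ × ℝ) →L[ℝ] ℝ, j ≠ 0 →
      T (G (t, 0, 0)) = G q → (∀ᶠ r in 𝓝 q, r ∈ A → j r = 0) → False := by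
    intro t ht q hq j hj hTq hjA
    obtain ⟨M, hM, k, hk, hkB⟩ := aux_core G V hVo hinj hder A hAV j hj q hq hjA T
      (t, 0, 0) (h0V t ht) hTq B hT
    have m1 : M (1, 0, 0) = 0 := by
      refine aux_curve k M _ hk B hkB (fun s => (s, 0, 0)) t rfl (1, 0, 0) ?_ (Icc a b)
        (uniqueDiffOn_Icc hab t ht) ht ?_
      · exact (hasDerivAt_id t).prodMk ((hasDerivAt_const t _).prodMk (hasDerivAt_const t _))
      · filter_upwards [self_mem_nhdsWithin] with s hs using h0B s hs
    have m2 : M (0, 1, 0) = 0 := by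
      refine aux_curve k M _ hk B hkB (fun s => (t, s, 0)) 0 rfl (0, 1, 0) ?_ (Iic 0)
        (uniqueDiffOn_Iic 0 0 (by simp)) (by simp) ?_
      · exact (hasDerivAt_const _ _).prodMk ((hasDerivAt_id _).prodMk (hasDerivAt_const _ _))
      · have : ∀ᶠ s : ℝ in 𝓝[Iic 0] 0, -(r t) < s :=
          (eventually_gt_nhds (by linarith [hr t ht])).filter_mono nhdsWithin_le_nhds
        filter_upwards [self_mem_nhdsWithin, this] with s hs hs'
        rw [hB]
        exact ⟨ht, Or.inr ⟨rfl, hs, by simp only; linarith⟩⟩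
    have m3 : M (0, 0, 1) = 0 := by
      refine aux_curve k M _ hk B hkB (fun s => (t, 0, s)) 0 rfl (0, 0, 1) ?_ (Iic 0)
        (uniqueDiffOn_Iic 0 0 (by simp)) (by simp) ?_
      · exact (hasDerivAt_const _ _).prodMk ((hasDerivAt_const _ _).prodMk (hasDerivAt_id _))
      · have : ∀ᶠ s : ℝ in 𝓝[Iic 0] 0, -(p t) < s :=
          (eventually_gt_nhds (by linarith [(hp t ht).1])).filter_mono nhdsWithin_le_nhds
        filter_upwards [self_mem_nhdsWithin, this] with s hs hs'
        rw [hB]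
        exact ⟨ht, Or.inl ⟨rfl, hs, by simp only; linarith⟩⟩
    apply hM
    refine ContinuousLinearMap.ext fun v => ?_
    obtain ⟨x, y, w⟩ := v
    have : ((x, y, w) : ℝ × ℝ × ℝ) = x • (1, 0, 0) + y • (0, 1, 0) + w • (0, 0, 1) := by simp
    rw [this, map_add, map_add, map_smul, map_smul, map_smul, m1, m2, m3]
    simp
  have hsub : T '' ((fun t => G (t, 0, 0)) '' Icc a b) ⊆ (fun t => G (t, 0, 0)) '' Icc a b := by
    rintro _ ⟨_, ⟨t, ht, rfl⟩, rfl⟩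
    obtain ⟨⟨t', x, y⟩, hq, hq'⟩ := hT _ (h0B t ht)
    have hqV := hAV hq
    have hq2 := hq
    rw [hA] at hq2
    obtain ⟨ht', ⟨hx, -⟩, ⟨hy, -⟩, hxy⟩ := hq2
    simp only at ht' hx hy hxy
    rcases hx.lt_or_eq with hx1 | hx1
    · exfalso
      refine key t ht _ hqV ((ContinuousLinearMap.snd ℝ ℝ ℝ).comp
        (ContinuousLinearMap.snd ℝ ℝ (ℝ × ℝ))) ?_ hq'.symm ?_
      · intro h
        have := congrArg (fun m : (ℝ × ℝ × ℝ) →L[ℝ] ℝ => m (0, 0, 1)) h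
        simp at this
      · have : ∀ᶠ u : ℝ × ℝ × ℝ in 𝓝 (t', x, y), 0 < u.2.1 :=
          (continuous_fst.comp continuous_snd).continuousAt.eventually (eventually_gt_nhds hx1)
        filter_upwards [this] with u hu huA
        rw [hA] at huA
        rcases huA.2.2.2 with h | h
        · exact absurd h hu.ne'
        · exact h
    rcases hy.lt_or_eq with hy1 | hy1
    · exfalso
      refine key t ht _ hqV ((ContinuousLinearMap.fst ℝ ℝ ℝ).comp
        (ContinuousLinearMap.snd ℝ ℝ (ℝ × ℝ))) ?_ hq'.symm ?_
      · intro h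
        have := congrArg (fun m : (ℝ × ℝ × ℝ) →L[ℝ] ℝ => m (0, 1, 0)) h
        simp at this
      · have : ∀ᶠ u : ℝ × ℝ × ℝ in 𝓝 (t', x, y), 0 < u.2.2 :=
          (continuous_snd.comp continuous_snd).continuousAt.eventually (eventually_gt_nhds hy1)
        filter_upwards [this] with u hu huA
        rw [hA] at huA
        rcases huA.2.2.2 with h | h
        · exact h
        · exact absurd h hu.ne'
    subst hx1 hy1
    exact ⟨t', ht', hq'⟩
  have hcomp : IsCompact ((fun t => G (t, 0, 0)) '' Icc a b) := by
    refine isCompact_Icc.image_of_continuousOn fun t ht => ContinuousAt.continuousWithinAt ?_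
    obtain ⟨L, hL⟩ := hder _ (h0V t ht)
    have h1 : ContinuousAt (fun t : ℝ => (t, (0:ℝ), (0:ℝ))) t := by fun_prop
    exact ContinuousAt.comp (g := G) hL.hasFDerivAt.continuousAt h1
  have hid := hsym T (aux_compact _ hcomp T hsub)
  have ha : a ∈ Icc a b := left_mem_Icc.2 hab.le
  have hpa := hp a ha
  have hb : (a, (0:ℝ), -(p a / 2)) ∈ B := by
    rw [hB]; exact ⟨ha, Or.inl ⟨rfl, by simp only; linarith, by simp only; linarith⟩⟩
  obtain ⟨q, hq, hq'⟩ := hT _ hb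
  rw [hid] at hq'
  have := hinj (hAV hq) (hV a ha 0 (-(p a / 2)) (by simpa)
    (by rw [abs_neg, abs_of_pos (by linarith)]; linarith)) hq'
  rw [hA] at hq
  have h2 := hq.2.2.1.1
  rw [this] at h2
  simp only at h2
  linarith

theorem aux_deriv {F : Type*} [NormedAddCommGroup F] [NormedSpace ℝ F] (g : ℝ → F) (t : ℝ)
    (h : ContDiffAt ℝ ∞ g t) : ContDiffAt ℝ ∞ (deriv g) t := by
  have h1 : ContDiffAt ℝ ∞ (fderiv ℝ g) t := h.fderiv_right (by simp)
  have h2 : deriv g = fun s => fderiv ℝ g s 1 := by funext s; exact (fderiv_apply_one_eq_deriv).symm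
  rw [h2]
  exact h1.clm_apply contDiffAt_const

theorem aux_cross (u v : ℝ → E3) (t : ℝ) (hu : ContDiffAt ℝ ∞ u t) (hv : ContDiffAt ℝ ∞ v t) :
    ContDiffAt ℝ ∞ (fun s => cross3 (u s) (v s)) t := by
  rw [contDiffAt_euclidean] at hu hv ⊢
  have a0 := hu 0
  have a1 := hu 1
  have a2 := hu 2
  have b0 := hv 0
  have b1 := hv 1
  have b2 := hv 2
  intro i
  fin_cases i
  · exact (a1.mul b2).sub (a2.mul b1)
  · exact (a2.mul b0).sub (a0.mul b2)
  · exact (a0.mul b1).sub (a1.mul b0)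

theorem aux_cross_left (u v : E3) : ⟪u, cross3 u v⟫ = 0 := by
  simp [PiLp.inner_apply, Fin.sum_univ_three, cross3]; ring

theorem aux_cross_right (u v : E3) : ⟪v, cross3 u v⟫ = 0 := by
  simp [PiLp.inner_apply, Fin.sum_univ_three, cross3]; ring

theorem aux_cross_self (u v : E3) :
    ⟪cross3 u v, cross3 u v⟫ = ⟪u, u⟫ * ⟪v, v⟫ - ⟪u, v⟫ ^ 2 := by
  simp [EuclideanSpace.real_norm_sq_eq, PiLp.inner_apply, Fin.sum_univ_three, cross3]; ring

theorem aux_perp (a b : ℝ) (hab : a < b) (c : ℝ → E3) (hc : ContDiff ℝ ∞ c)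
    (harc : ∀ t ∈ Icc a b, ‖deriv c t‖ = 1) (t : ℝ) (ht : t ∈ Icc a b) :
    ⟪deriv c t, deriv (deriv c) t⟫ = 0 := by
  have h1 : HasDerivAt (deriv c) (deriv (deriv c) t) t :=
    ((aux_deriv c t hc.contDiffAt).differentiableAt (by simp)).hasDerivAt
  have h2 := (h1.inner ℝ h1).hasDerivWithinAt (s := Icc a b)
  have h3 : HasDerivWithinAt (fun s => ⟪deriv c s, deriv c s⟫) 0 (Icc a b) t := by
    refine (hasDerivWithinAt_const t (Icc a b) (1:ℝ)).congr (fun s hs => ?_) ?_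
    · rw [real_inner_self_eq_norm_sq, harc s hs]; norm_num
    · rw [real_inner_self_eq_norm_sq, harc t ht]; norm_num
  have := (uniqueDiffOn_Icc hab t ht).eq_deriv _ h2 h3
  rw [real_inner_comm (deriv c t) (deriv (deriv c) t)] at this
  rw [real_inner_comm] at this ⊢
  linarith

theorem aux_li (e n : E3) (he : ⟪e, e⟫ = 1) (hn : ⟪n, n⟫ = 1) (hen : ⟪e, n⟫ = 0)
    (p q C S r x y : ℝ) (hC : C ≠ 0) (hS : S ≠ 0)
    (h : r • e + x • (p • e + (C • n + (-S) • cross3 e n)) -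
      y • (q • e + (C • n + S • cross3 e n)) = 0) : r = 0 ∧ x = 0 ∧ y = 0 := by
  have hb := aux_cross_self e n
  rw [he, hn, hen] at hb
  have h1 := aux_cross_left e n
  have h2 := aux_cross_right e n
  have i1 := congrArg (fun w => ⟪e, w⟫) h
  have i2 := congrArg (fun w => ⟪n, w⟫) h
  have i3 := congrArg (fun w => ⟪cross3 e n, w⟫) h
  have hne : ⟪n, e⟫ = 0 := by rw [real_inner_comm]; exact hen
  have h1' : ⟪cross3 e n, e⟫ = 0 := by rw [real_inner_comm]; exact h1
  have h2' : ⟪cross3 e n, n⟫ = 0 := by rw [real_inner_comm]; exact h2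
  simp only [inner_add_right, inner_sub_right, inner_smul_right, inner_zero_right, he, hn, hen,
    hb, h1, h2, hne, h1', h2'] at i1 i2 i3
  have k1 : x - y = 0 := by
    have : C * (x - y) = 0 := by linarith
    exact (mul_eq_zero.1 this).resolve_left hC
  have k2 : x + y = 0 := by
    have : S * (x + y) = 0 := by linarith
    exact (mul_eq_zero.1 this).resolve_left hS
  have hx : x = 0 := by linarith
  have hy : y = 0 := by linarith
  subst hx hy
  exact ⟨by linarith, rfl, rfl⟩

/-- Corollary 1.3: if the crease `C = c(I)` has no symmetries
(the only isometry of `ℝ³` preserving `C` is the identity), then for `ε > 0`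
sufficiently small and any `δ ∈ (0, ε]`, no isometry of `ℝ³` maps `φ_f(Ω_δ)`
into `ψ_f(Ω_ε)`. -/
theorem stmt8 (a b : ℝ) (hab : a < b)
    (c : ℝ → E3) (hc : ContDiff ℝ ∞ c) (hinj : InjOn c (Icc a b))
    (harc : ∀ t ∈ Icc a b, ‖deriv c t‖ = 1)
    (κ : ℝ → ℝ) (hκ : ∀ t, κ t = ‖deriv (deriv c) t‖)
    (hκpos : ∀ t ∈ Icc a b, 0 < κ t)
    (e n bi : ℝ → E3) (τ : ℝ → ℝ)
    (he : ∀ t, e t = deriv c t)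
    (hn : ∀ t, n t = (κ t)⁻¹ • deriv (deriv c) t)
    (hbi : ∀ t, bi t = cross3 (e t) (n t))
    (hτ : ∀ t, τ t = ⟪deriv n t, bi t⟫)
    (α : ℝ → ℝ) (hα : ContDiff ℝ ∞ α)
    (hα1 : ∀ t ∈ Icc a b, 0 < |α t| ∧ |α t| < π / 2)
    (β βc : ℝ → ℝ)
    (hβ : ∀ t ∈ Icc a b, 0 < β t ∧ β t < π ∧
      cos (β t) * (κ t * sin (α t)) = (deriv α t + τ t) * sin (β t))
    (hβc : ∀ t ∈ Icc a b, 0 < βc t ∧ βc t < π ∧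
      cos (βc t) * (κ t * sin (α t)) = (deriv α t - τ t) * sin (βc t))
    (ξ ξc : ℝ → E3)
    (hξ : ∀ t, ξ t = cos (β t) • e t +
      sin (β t) • (cos (α t) • n t + sin (α t) • bi t))
    (hξc : ∀ t, ξc t = cos (βc t) • e t +
      sin (βc t) • (cos (-α t) • n t + sin (-α t) • bi t))
    (f fc : ℝ → ℝ → E3)
    (hf : ∀ t v, f t v = c t + v • ξ t)
    (hfc : ∀ t v, fc t v = c t + v • ξc t)
    (φ ψ : ℝ × ℝ → E3)
    (hφ : ∀ t v, φ (t, v) = if 0 ≤ v then f t v else fc t v)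
    (hψ : ∀ t v, ψ (t, v) = if 0 ≤ v then fc t v else f t v)
    -- `C` has no symmetries:
    (hsym : ∀ T : E3 ≃ᵢ E3, T '' (c '' Icc a b) = c '' Icc a b → ∀ x, T x = x) :
    ∃ ε₀ > (0 : ℝ), ∀ ε : ℝ, 0 < ε → ε ≤ ε₀ → ∀ δ : ℝ, 0 < δ → δ ≤ ε →
      ¬ ∃ T : E3 ≃ᵢ E3,
        T '' (φ '' (Icc a b ×ˢ Ioo (-δ) δ)) ⊆ ψ '' (Icc a b ×ˢ Ioo (-ε) ε) := by
  have hI : ∀ t ∈ Icc a b, 0 < κ t ∧ sin (α t) ≠ 0 ∧ cos (α t) ≠ 0 := by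
    intro t ht
    obtain ⟨h1, h2⟩ := hα1 t ht
    have h3 := abs_lt.1 h2
    refine ⟨hκpos t ht, ?_, (cos_pos_of_mem_Ioo ⟨by linarith, h3.2⟩).ne'⟩
    intro h0
    exact (abs_pos.1 h1) ((sin_eq_zero_iff_of_lt_of_lt (by linarith [pi_pos])
      (by linarith [pi_pos])).1 h0)
  set z : ℝ → E3 := fun t => ((deriv α t + τ t) / (κ t * sin (α t))) • e t +
    (cos (α t) • n t + sin (α t) • bi t) with hz
  set zc : ℝ → E3 := fun t => ((deriv α t - τ t) / (κ t * sin (α t))) • e t +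
    (cos (α t) • n t + (-sin (α t)) • bi t) with hzc
  have hξz : ∀ t ∈ Icc a b, ξ t = sin (β t) • z t := by
    intro t ht
    obtain ⟨h1, h2, -⟩ := hI t ht
    obtain ⟨-, -, h⟩ := hβ t ht
    have hne : κ t * sin (α t) ≠ 0 := mul_ne_zero h1.ne' h2
    have : cos (β t) = sin (β t) * ((deriv α t + τ t) / (κ t * sin (α t))) := by
      rw [← mul_div_assoc, eq_div_iff hne, h, mul_comm]
    rw [hξ, this]
    simp only [hz]
    module
  have hξzc : ∀ t ∈ Icc a b, ξc t = sin (βc t) • zc t := by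
    intro t ht
    obtain ⟨h1, h2, -⟩ := hI t ht
    obtain ⟨-, -, h⟩ := hβc t ht
    have hne : κ t * sin (α t) ≠ 0 := mul_ne_zero h1.ne' h2
    have : cos (βc t) = sin (βc t) * ((deriv α t - τ t) / (κ t * sin (α t))) := by
      rw [← mul_div_assoc, eq_div_iff hne, h, mul_comm]
    rw [hξc, this, cos_neg, sin_neg]
    simp only [hzc]
    module
  have hsm : ∀ t ∈ Icc a b, ContDiffAt ℝ ∞ z t ∧ ContDiffAt ℝ ∞ zc t := by
    intro t ht
    obtain ⟨h1, h2, -⟩ := hI t ht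
    have hne : κ t * sin (α t) ≠ 0 := mul_ne_zero h1.ne' h2
    have s1 : ContDiffAt ℝ ∞ (deriv c) t := aux_deriv c t hc.contDiffAt
    have s2 : ContDiffAt ℝ ∞ (deriv (deriv c)) t := aux_deriv _ t s1
    have se : ContDiffAt ℝ ∞ e t := by rw [funext he]; exact s1
    have sκ : ContDiffAt ℝ ∞ κ t := by
      rw [funext hκ]
      refine s2.norm ℝ ?_
      intro h0
      rw [hκ, h0, norm_zero] at h1
      exact lt_irrefl _ h1
    have sn : ContDiffAt ℝ ∞ n t := by
      rw [funext hn]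
      exact (sκ.inv h1.ne').smul s2
    have sb : ContDiffAt ℝ ∞ bi t := by
      rw [funext hbi]
      exact aux_cross e n t se sn
    have sτ : ContDiffAt ℝ ∞ τ t := by
      rw [funext hτ]
      exact (aux_deriv n t sn).inner ℝ sb
    have sα : ContDiffAt ℝ ∞ α t := hα.contDiffAt
    have sα' : ContDiffAt ℝ ∞ (deriv α) t := aux_deriv α t sα
    have ss : ContDiffAt ℝ ∞ (fun t => sin (α t)) t := sα.sin
    have sc : ContDiffAt ℝ ∞ (fun t => cos (α t)) t := sα.cos
    constructor
    · exact (((sα'.add sτ).div (sκ.mul ss) hne).smul se).add ((sc.smul sn).add (ss.smul sb))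
    · exact (((sα'.sub sτ).div (sκ.mul ss) hne).smul se).add ((sc.smul sn).add (ss.neg.smul sb))
  obtain ⟨V, hVo, hVinj, hVder, ε₀, hε₀, hV⟩ := aux_tube a b c z zc hinj
    (fun t _ => hc.contDiffAt.of_le (by simp))
    (fun t ht => (hsm t ht).1.of_le (by simp)) (fun t ht => (hsm t ht).2.of_le (by simp)) (by
      intro t ht r x y h
      obtain ⟨h1, h2, h3⟩ := hI t ht
      have hp := aux_perp a b hab c hc harc t ht
      refine aux_li (e t) (n t) ?_ ?_ ?_ ((deriv α t - τ t) / (κ t * sin (α t)))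
        ((deriv α t + τ t) / (κ t * sin (α t))) (cos (α t)) (sin (α t)) r x y h3 h2 ?_
      · rw [he, real_inner_self_eq_norm_sq, harc t ht]; norm_num
      · rw [real_inner_self_eq_norm_sq, hn, norm_smul, ← hκ, norm_inv, Real.norm_eq_abs,
          abs_of_pos h1, inv_mul_cancel₀ h1.ne']; norm_num
      · rw [he, hn, inner_smul_right, hp, mul_zero]
      · rw [← hbi]
        rw [← he] at h
        exact h)
  refine ⟨ε₀, hε₀, fun ε hε hεε δ hδ hδε => ?_⟩
  rintro ⟨T, hT⟩
  have hsβ : ∀ t ∈ Icc a b, 0 < sin (β t) := fun t ht =>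
    sin_pos_of_pos_of_lt_pi (hβ t ht).1 (hβ t ht).2.1
  have hsβc : ∀ t ∈ Icc a b, 0 < sin (βc t) := fun t ht =>
    sin_pos_of_pos_of_lt_pi (hβc t ht).1 (hβc t ht).2.1
  refine aux_final a b hab (fun q : ℝ × ℝ × ℝ => c q.1 + q.2.1 • zc q.1 - q.2.2 • z q.1) V hVo
    hVinj hVder ε hε
    (fun t ht x y hx hy => hV t ht x y (hx.trans_le hεε) (hy.trans_le hεε))
    (by simpa using hsym)
    (fun t => δ * sin (β t)) (fun t => δ * sin (βc t))
    (fun t ht => ⟨mul_pos hδ (hsβ t ht), ?_⟩) (fun t ht => mul_pos hδ (hsβc t ht)) _ _ rfl rfl T ?_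
  · nlinarith [sin_le_one (β t), hsβ t ht]
  rintro ⟨t, x, y⟩ ⟨ht, hq⟩
  simp only at ht hq
  have hmem : c t + x • zc t - y • z t ∈ φ '' (Icc a b ×ˢ Ioo (-δ) δ) := by
    rcases hq with ⟨rfl, hy, hy'⟩ | ⟨rfl, hx, hx'⟩
    · have hs := hsβ t ht
      have hv : 0 ≤ -y / sin (β t) := div_nonneg (by linarith) hs.le
      refine ⟨(t, -y / sin (β t)), ⟨ht, by simp only; linarith, ?_⟩, ?_⟩
      · simp only; rw [div_lt_iff₀ hs]; exact hy'
      · rw [hφ, if_pos hv, hf, hξz t ht, smul_smul, div_mul_cancel₀ _ hs.ne']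
        simp [sub_eq_add_neg]
    · have hs := hsβc t ht
      rcases hx.lt_or_eq with hx1 | rfl
      · have hv : x / sin (βc t) < 0 := div_neg_of_neg_of_pos hx1 hs
        refine ⟨(t, x / sin (βc t)), ⟨ht, ?_, by simp only; linarith⟩, ?_⟩
        · simp only; rw [lt_div_iff₀ hs]; linarith
        · rw [hφ, if_neg (not_le.2 hv), hfc, hξzc t ht, smul_smul, div_mul_cancel₀ _ hs.ne']
          simp
      · refine ⟨(t, 0), ⟨ht, by simp only; linarith, hδ⟩, ?_⟩
        rw [hφ, if_pos le_rfl, hf]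
        simp
  obtain ⟨⟨t', v⟩, ⟨ht', hv1, hv2⟩, hTv⟩ := hT ⟨_, hmem, rfl⟩
  simp only at ht' hv1 hv2
  show T (c t + x • zc t - y • z t) ∈ _
  rw [← hTv, hψ]
  by_cases hv : 0 ≤ v
  · have hs := hsβc t' ht'
    refine ⟨(t', v * sin (βc t'), 0), ⟨ht', ⟨mul_nonneg hv hs.le, ?_⟩, ⟨le_rfl, hε⟩, Or.inr rfl⟩, ?_⟩
    · simp only; nlinarith [sin_le_one (βc t')]
    · rw [if_pos hv, hfc, hξzc t' ht', smul_smul]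
      simp
  · push Not at hv
    have hs := hsβ t' ht'
    refine ⟨(t', 0, -v * sin (β t')),
      ⟨ht', ⟨le_rfl, hε⟩, ⟨mul_nonneg (by linarith) hs.le, ?_⟩, Or.inl rfl⟩, ?_⟩
    · simp only; nlinarith [sin_le_one (β t')]
    · rw [if_neg (not_le.2 hv), hf, hξz t' ht', smul_smul]
      simp
end
end

section
/- The space curve C₀ := c₀([1/10, 9/10]) has no symmetries: if T is an isometry of ℝ³ with T(C₀) = C₀, then T is the identity map of ℝ³. -/
noncomputable section
open Real Set
open scoped ContDiff

local notation "⟪" x ", " y "⟫" => @inner ℝ _ _ x y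

/-- The space curve `c₀(t) = (arctan t, log(1+t²)/√2, t - arctan t)`. -/
def c₀ : ℝ → E3 := fun t =>
  (WithLp.equiv 2 (Fin 3 → ℝ)).symm
    ![arctan t, log (1 + t ^ 2) / Real.sqrt 2, t - arctan t]


/-- The velocity of `c₀`. -/
def vel (t : ℝ) : E3 :=
  !₂[1 / (1 + t ^ 2), Real.sqrt 2 * t / (1 + t ^ 2), t ^ 2 / (1 + t ^ 2)]

lemma hasDerivAt_coords {f : ℝ → E3} {v : E3} {t : ℝ} :
    HasDerivAt f v t ↔ ∀ i, HasDerivAt (fun s => f s i) (v i) t := by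
  constructor
  · intro h i
    exact (EuclideanSpace.proj (𝕜 := ℝ) i).hasFDerivAt.comp_hasDerivAt t h
  · intro h
    have h1 : HasDerivAt (fun s i => f s i) (fun i => v i) t := hasDerivAt_pi.2 h
    exact (EuclideanSpace.equiv (Fin 3) ℝ).symm.toContinuousLinearMap.hasFDerivAt.comp_hasDerivAt t h1

lemma hasDerivAt_c₀ (t : ℝ) : HasDerivAt c₀ (vel t) t := by
  have hp : (1 + t ^ 2 : ℝ) ≠ 0 := by positivity
  have h2 : Real.sqrt 2 ≠ 0 := by positivity
  have hs : Real.sqrt 2 * Real.sqrt 2 = 2 := Real.mul_self_sqrt (by norm_num)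
  rw [hasDerivAt_coords]
  intro i
  fin_cases i
  · simpa [c₀, vel] using Real.hasDerivAt_arctan t
  · have h1 : HasDerivAt (fun t : ℝ => 1 + t ^ 2) (2 * t) t := by
      simpa using (hasDerivAt_pow 2 t).const_add 1
    have h3 := (h1.log hp).div_const (Real.sqrt 2)
    have e : 2 * t / (1 + t ^ 2) / Real.sqrt 2 = Real.sqrt 2 * t / (1 + t ^ 2) := by
      field_simp
      rw [Real.sq_sqrt (by norm_num)]
      ring
    rw [e] at h3
    simpa [c₀, vel] using h3
  · have h3 := (hasDerivAt_id t).sub (Real.hasDerivAt_arctan t)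
    have e : 1 - 1 / (1 + t ^ 2) = t ^ 2 / (1 + t ^ 2) := by
      field_simp
      ring
    rw [e] at h3
    exact h3

lemma inner_vel (s t : ℝ) :
    inner ℝ (vel s) (vel t) = (1 + s * t) ^ 2 / ((1 + s ^ 2) * (1 + t ^ 2)) := by
  have hs : (1 + s ^ 2 : ℝ) ≠ 0 := by positivity
  have hp : (1 + t ^ 2 : ℝ) ≠ 0 := by positivity
  simp only [vel, PiLp.inner_apply, Fin.sum_univ_three]
  simp
  field_simp
  rw [Real.sq_sqrt (by norm_num)]
  ring

lemma norm_vel (t : ℝ) : ‖vel t‖ = 1 := by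
  have h := inner_vel t t
  have hp : (1 + t ^ 2 : ℝ) ≠ 0 := by positivity
  have e : (1 + t * t) ^ 2 / ((1 + t ^ 2) * (1 + t ^ 2)) = 1 := by
    field_simp
  rw [e, real_inner_self_eq_norm_sq] at h
  nlinarith [norm_nonneg (vel t)]

lemma c₀_coord (t : ℝ) : (c₀ t) 0 + (c₀ t) 2 = t := by
  simp [c₀]

/-- the curve `C₀ = c₀([1/10, 9/10])` has no symmetries: any
isometry of `ℝ³` (distance-preserving bijection) with `T(C₀) = C₀` is the
identity. -/
theorem stmt12 :
    ∀ T : E3 ≃ᵢ E3,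
      T '' (c₀ '' Icc (1 / 10 : ℝ) (9 / 10)) = c₀ '' Icc (1 / 10 : ℝ) (9 / 10) →
      ∀ x : E3, T x = x := by
  intro T hT
  obtain ⟨L, b, hL⟩ : ∃ (L : E3 ≃ₗᵢ[ℝ] E3) (b : E3), ∀ x, T x = L x + b := by
    refine ⟨T.toRealAffineIsometryEquiv.linearIsometryEquiv, T 0, fun x => ?_⟩
    have := T.toRealAffineIsometryEquiv.map_vadd 0 x
    simpa using this
  -- the transported curve and its derivative
  have hTc : ∀ t, HasDerivAt (fun s => T (c₀ s)) (L (vel t)) t := by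
    intro t
    have h := (L.toContinuousLinearEquiv.toContinuousLinearMap.hasFDerivAt.comp_hasDerivAt t
      (hasDerivAt_c₀ t)).add_const b
    have e : (fun s => T (c₀ s)) = fun s => L (c₀ s) + b := funext fun s => hL _
    rw [e]
    exact h
  obtain ⟨ψ, hψ⟩ : ∃ ψ : ℝ → ℝ, ∀ t, ψ t = (T (c₀ t)) 0 + (T (c₀ t)) 2 := ⟨_, fun _ => rfl⟩
  obtain ⟨dψ, hdψ⟩ : ∃ d : ℝ → ℝ, ∀ t, HasDerivAt ψ (d t) t := by
    refine ⟨fun t => (L (vel t)) 0 + (L (vel t)) 2, fun t => ?_⟩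
    have h := hasDerivAt_coords.1 (hTc t)
    have e : ψ = fun t => (T (c₀ t)) 0 + (T (c₀ t)) 2 := funext hψ
    rw [e]
    exact (h 0).add (h 2)
  have hmem : ∀ t ∈ Icc (1 / 10 : ℝ) (9 / 10),
      ψ t ∈ Icc (1 / 10 : ℝ) (9 / 10) ∧ T (c₀ t) = c₀ (ψ t) := by
    intro t ht
    have : T (c₀ t) ∈ c₀ '' Icc (1 / 10 : ℝ) (9 / 10) := by
      rw [← hT]
      exact mem_image_of_mem _ (mem_image_of_mem _ ht)
    obtain ⟨u, hu, hu'⟩ := this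
    have : ψ t = u := by rw [hψ, ← hu', c₀_coord]
    rw [this]
    exact ⟨hu, hu'.symm⟩
  have hsurj : ∀ u ∈ Icc (1 / 10 : ℝ) (9 / 10), ∃ t ∈ Icc (1 / 10 : ℝ) (9 / 10), ψ t = u := by
    intro u hu
    have : c₀ u ∈ T '' (c₀ '' Icc (1 / 10 : ℝ) (9 / 10)) := by
      rw [hT]
      exact mem_image_of_mem _ hu
    obtain ⟨_, ⟨t, ht, rfl⟩, h⟩ := this
    exact ⟨t, ht, by rw [hψ, h, c₀_coord]⟩
  have hvel : ∀ t ∈ Ioo (1 / 10 : ℝ) (9 / 10), L (vel t) = dψ t • vel (ψ t) := by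
    intro t ht
    have h1 : HasDerivAt (fun s => c₀ (ψ s)) (dψ t • vel (ψ t)) t :=
      (hasDerivAt_c₀ (ψ t)).scomp t (hdψ t)
    refine (hTc t).unique (h1.congr_of_eventuallyEq ?_)
    filter_upwards [Icc_mem_nhds ht.1 ht.2] with s hs
    exact (hmem s hs).2
  have habs : ∀ t ∈ Ioo (1 / 10 : ℝ) (9 / 10), |dψ t| = 1 := by
    intro t ht
    have h := congrArg norm (hvel t ht)
    rw [LinearIsometryEquiv.norm_map, norm_smul, norm_vel, norm_vel, mul_one] at h
    exact h.symm
  have hdiff : Differentiable ℝ ψ := fun t => (hdψ t).differentiableAt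
  have hmono : MonotoneOn (fun t => ψ t + t) (Icc (1 / 10 : ℝ) (9 / 10)) := by
    apply monotoneOn_of_deriv_nonneg (convex_Icc _ _)
    · exact (hdiff.continuous.add continuous_id).continuousOn
    · exact (hdiff.add differentiable_id).differentiableOn
    · intro t ht
      rw [interior_Icc] at ht
      have h : HasDerivAt (fun t => ψ t + t) (dψ t + 1) t := (hdψ t).add (hasDerivAt_id t)
      rw [h.deriv]
      linarith [(abs_le.1 (habs t ht).le).1]
  have hanti : AntitoneOn (fun t => ψ t - t) (Icc (1 / 10 : ℝ) (9 / 10)) := by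
    apply antitoneOn_of_deriv_nonpos (convex_Icc _ _)
    · exact (hdiff.continuous.sub continuous_id).continuousOn
    · exact (hdiff.sub differentiable_id).differentiableOn
    · intro t ht
      rw [interior_Icc] at ht
      have h : HasDerivAt (fun t => ψ t - t) (dψ t - 1) t := (hdψ t).sub (hasDerivAt_id t)
      rw [h.deriv]
      linarith [(abs_le.1 (habs t ht).le).2]
  have hl : (1 / 10 : ℝ) ∈ Icc (1 / 10 : ℝ) (9 / 10) := by constructor <;> norm_num
  have hr : (9 / 10 : ℝ) ∈ Icc (1 / 10 : ℝ) (9 / 10) := by constructor <;> norm_num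
  obtain ⟨p, hp, hpe⟩ := hsurj _ hl
  obtain ⟨q, hq, hqe⟩ := hsurj _ hr
  have key : (∀ t ∈ Icc (1 / 10 : ℝ) (9 / 10), ψ t = t) ∨
      (∀ t ∈ Icc (1 / 10 : ℝ) (9 / 10), ψ t = 1 - t) := by
    rcases le_total p q with h | h
    · left
      have h1 := hanti hp hq h
      simp only [hpe, hqe] at h1
      have ep : p = 1 / 10 := by linarith [hp.1, hq.2]
      have eq' : q = 9 / 10 := by linarith [hp.1, hq.2]
      subst ep
      subst eq'
      intro t ht
      have h2 := hanti hl ht ht.1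
      have h3 := hanti ht hr ht.2
      simp only [hpe, hqe] at h2 h3
      linarith
    · right
      have h1 := hmono hq hp h
      simp only [hpe, hqe] at h1
      have ep : q = 1 / 10 := by linarith [hq.1, hp.2]
      have eq' : p = 9 / 10 := by linarith [hq.1, hp.2]
      subst ep
      subst eq'
      intro t ht
      have h2 := hmono hl ht ht.1
      have h3 := hmono ht hr ht.2
      simp only [hpe, hqe] at h2 h3
      linarith
  rcases key with key | key
  · have hd : ∀ t ∈ Ioo (1 / 10 : ℝ) (9 / 10), L (vel t) = vel t := by
      intro t ht
      refine (hTc t).unique ((hasDerivAt_c₀ t).congr_of_eventuallyEq ?_)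
      filter_upwards [Icc_mem_nhds ht.1 ht.2] with s hs
      rw [(hmem s hs).2, key s hs]
    have hfix : ∀ x, L x = x := by
      intro x
      have hz : ∀ t ∈ Ioo (1 / 10 : ℝ) (9 / 10),
          (L x - x) 0 + t * (Real.sqrt 2 * (L x - x) 1) + t ^ 2 * (L x - x) 2 = 0 := by
        intro t ht
        have h : inner ℝ (vel t) (L x - x) = 0 := by
          rw [inner_sub_right, sub_eq_zero]
          conv_lhs => rw [← hd t ht]
          exact L.inner_map_map _ _
        have hp : (1 + t ^ 2 : ℝ) ≠ 0 := by positivity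
        generalize L x - x = y at h ⊢
        simp only [vel, PiLp.inner_apply, Fin.sum_univ_three] at h
        simp at h
        field_simp at h
        linarith
      have a1 := hz (2 / 10) (by constructor <;> norm_num)
      have a2 := hz (4 / 10) (by constructor <;> norm_num)
      have a3 := hz (6 / 10) (by constructor <;> norm_num)
      rw [← sub_eq_zero]
      generalize L x - x = y at a1 a2 a3 ⊢
      have b0 : y 0 = 0 := by linarith
      have b1 : Real.sqrt 2 * y 1 = 0 := by linarith
      have b2 : y 2 = 0 := by linarith
      have b1' : y 1 = 0 := (mul_eq_zero.1 b1).resolve_left (by positivity)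
      ext i
      fin_cases i
      · exact b0
      · exact b1'
      · exact b2
    have hb : b = 0 := by
      have h := (hmem _ hl).2
      rw [key _ hl, hL, hfix] at h
      simpa using h
    intro x
    rw [hL, hfix, hb, add_zero]
  · exfalso
    have hd : ∀ t ∈ Ioo (1 / 10 : ℝ) (9 / 10), L (vel t) = - vel (1 - t) := by
      intro t ht
      have h1 : HasDerivAt (fun s : ℝ => 1 - s) (-1) t := by
        simpa using (hasDerivAt_id t).const_sub 1
      have h2 : HasDerivAt (fun s => c₀ (1 - s)) ((-1 : ℝ) • vel (1 - t)) t :=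
        (hasDerivAt_c₀ (1 - t)).scomp t h1
      rw [neg_one_smul] at h2
      refine (hTc t).unique (h2.congr_of_eventuallyEq ?_)
      filter_upwards [Icc_mem_nhds ht.1 ht.2] with s hs
      rw [(hmem s hs).2, key s hs]
    have h := L.inner_map_map (vel (1 / 5)) (vel (1 / 2))
    rw [hd _ (by constructor <;> norm_num), hd _ (by constructor <;> norm_num), inner_neg_neg,
      inner_vel, inner_vel] at h
    norm_num at h
end
end

section
/- (Theorem B) Let c₀(t) := (arctan t, log(1+t²)/√2, t − arctan t) on I₀ := [1/10, 9/10] and α(t) := π(t+10)/24. Let P₁(δ) := φ_f(Ω_δ), P₂(δ) := ψ_f(Ω_δ), P₃(δ) := φ_{f_*}(Ω_δ), P₄(δ) := ψ_{f_*}(Ω_δ) be the images of the four origami maps on Ω_δ := I₀ × (−δ, δ), built as described in the context. Then for all sufficiently small ε > 0 the following holds: for every δ ∈ (0, ε], every i, j ∈ {1,2,3,4} and every isometry T of ℝ³, if T(P_i(δ)) ⊆ P_j(ε) then i = j. In particular the four curved foldings are mutually non-congruent. -/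
noncomputable section
open Real Set
open scoped ContDiff

local notation "⟪" x ", " y "⟫" => @inner ℝ _ _ x y

/-- The orientation-reversed curve `c₀^♯(t) = c₀(1 - t)`. -/
def c₀r : ℝ → E3 := fun t => c₀ (1 - t)

/-- Unit tangent of a unit-speed curve. -/
def tang (γ : ℝ → E3) : ℝ → E3 := fun t => deriv γ t

/-- Curvature `κ = |γ''|` of a unit-speed curve. -/
def curv (γ : ℝ → E3) : ℝ → ℝ := fun t => ‖deriv (deriv γ) t‖

/-- Unit principal normal `n = γ''/κ` of a unit-speed curve. -/
def pnorm (γ : ℝ → E3) : ℝ → E3 := fun t => (curv γ t)⁻¹ • deriv (deriv γ) t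

/-- Unit binormal `b = e × n` of a unit-speed curve. -/
def binorm (γ : ℝ → E3) : ℝ → E3 := fun t => cross3 (tang γ t) (pnorm γ t)

/-- Torsion `τ = n' · b` of a unit-speed curve. -/
def tors (γ : ℝ → E3) : ℝ → ℝ := fun t => ⟪deriv (pnorm γ) t, binorm γ t⟫

/-- The first angular function `α(t) = π(t+10)/24`. -/
def α₀ : ℝ → ℝ := fun t => π * (t + 10) / 24

/-- The first angular function `α_*` of the inverse strip, the function with
values in `(0, π/2)` determined by `cos α_*(t) = κ(t) cos α(t)/κ^♯(t)`,
where `κ^♯` is the curvature of `c₀^♯` (realized by `arccos`). -/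
def α₀st : ℝ → ℝ := fun t => Real.arccos (curv c₀ t * cos (α₀ t) / curv c₀r t)


/-- Explicit unit tangent. -/
def eV (t : ℝ) : E3 := !₂[1 / (1 + t ^ 2), √2 * t / (1 + t ^ 2), t ^ 2 / (1 + t ^ 2)]
/-- Explicit principal normal. -/
def nV (t : ℝ) : E3 := !₂[-√2 * t / (1 + t ^ 2), (1 - t ^ 2) / (1 + t ^ 2), √2 * t / (1 + t ^ 2)]
/-- Explicit binormal. -/
def bV (t : ℝ) : E3 := !₂[t ^ 2 / (1 + t ^ 2), -√2 * t / (1 + t ^ 2), 1 / (1 + t ^ 2)]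

lemma s2 : √2 * √2 = 2 := Real.mul_self_sqrt (by norm_num)

lemma hasDerivAt_vec3 {f g h : ℝ → ℝ} {f' g' h' t : ℝ} (hf : HasDerivAt f f' t)
    (hg : HasDerivAt g g' t) (hh : HasDerivAt h h' t) :
    HasDerivAt (fun s => (!₂[f s, g s, h s] : E3)) !₂[f', g', h'] t := by
  have h1 : HasDerivAt (fun s => ![f s, g s, h s]) ![f', g', h'] t := by
    rw [hasDerivAt_pi]
    intro i
    fin_cases i
    · exact hf
    · exact hg
    · exact hh
  exact ((PiLp.continuousLinearEquiv 2 ℝ (fun _ : Fin 3 => ℝ)).symm.toContinuousLinearMap.hasFDerivAt.comp_hasDerivAt t h1)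

lemma pos1 (t : ℝ) : 0 < 1 + t ^ 2 := by positivity

lemma hasDerivAt_den (t : ℝ) : HasDerivAt (fun s : ℝ => 1 + s ^ 2) (2 * t) t := by
  simpa using ((hasDerivAt_id t).pow 2).const_add 1

lemma hc₀ (t : ℝ) : HasDerivAt c₀ (eV t) t := by
  have h2 := ne_of_gt (pos1 t)
  have hs := s2
  have hsn : √2 ≠ 0 := by positivity
  have h1 := Real.hasDerivAt_arctan t
  have h3 := ((hasDerivAt_den t).log h2).div_const (√2)
  have := hasDerivAt_vec3 h1 h3 ((hasDerivAt_id t).sub h1)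
  refine HasDerivAt.congr_deriv this ?_
  ext i
  fin_cases i
  · simp [eV]
  · simp [eV]; field_simp; linear_combination (-t) * s2
  · simp [eV]; field_simp; ring

lemma heV (t : ℝ) : HasDerivAt eV ((√2 / (1 + t ^ 2)) • nV t) t := by
  have h2 := ne_of_gt (pos1 t)
  have hs := s2
  have hd := hasDerivAt_den t
  have hi := hasDerivAt_id t
  have := hasDerivAt_vec3 ((hasDerivAt_const t (1:ℝ)).div hd h2)
    ((hi.const_mul (√2)).div hd h2) ((hi.pow 2).div hd h2)
  refine HasDerivAt.congr_deriv this ?_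
  ext i
  fin_cases i
  · simp [nV]; field_simp; linear_combination t * hs
  · simp [nV]; field_simp; ring
  · simp [nV]; field_simp; linear_combination (-t) * hs

lemma hnV (t : ℝ) : HasDerivAt nV ((√2 / (1 + t ^ 2)) • (bV t - eV t)) t := by
  have h2 := ne_of_gt (pos1 t)
  have hs := s2
  have hd := hasDerivAt_den t
  have hi := hasDerivAt_id t
  have := hasDerivAt_vec3 ((hi.const_mul (-√2)).div hd h2)
    (((hi.pow 2).const_sub 1).div hd h2) ((hi.const_mul (√2)).div hd h2)
  refine HasDerivAt.congr_deriv this ?_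
  ext i
  fin_cases i
  · simp [bV, eV]; field_simp; ring
  · simp [bV, eV]; field_simp; linear_combination 2 * t * hs
  · simp [bV, eV]; field_simp; ring

lemma inner3 (u v : E3) : ⟪u, v⟫ = u 0 * v 0 + u 1 * v 1 + u 2 * v 2 := by
  simp [PiLp.inner_apply, Fin.sum_univ_three]; ring

lemma e_e (t : ℝ) : ⟪eV t, eV t⟫ = 1 := by
  have h2 := ne_of_gt (pos1 t)
  rw [inner3]; simp [eV]; field_simp; linear_combination t^2 * s2
lemma n_n (t : ℝ) : ⟪nV t, nV t⟫ = 1 := by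
  have h2 := ne_of_gt (pos1 t)
  rw [inner3]; simp [nV]; field_simp; linear_combination 2 * t^2 * s2
lemma b_b (t : ℝ) : ⟪bV t, bV t⟫ = 1 := by
  have h2 := ne_of_gt (pos1 t)
  rw [inner3]; simp [bV]; field_simp; linear_combination t^2 * s2
lemma e_n (t : ℝ) : ⟪eV t, nV t⟫ = 0 := by
  have h2 := ne_of_gt (pos1 t)
  rw [inner3]; simp [nV, eV]; field_simp; ring
lemma e_b (t : ℝ) : ⟪eV t, bV t⟫ = 0 := by
  have h2 := ne_of_gt (pos1 t)
  rw [inner3]; simp [bV, eV]; field_simp; linear_combination - t^2 * s2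
lemma n_b (t : ℝ) : ⟪nV t, bV t⟫ = 0 := by
  have h2 := ne_of_gt (pos1 t)
  rw [inner3]; simp [bV, nV]; field_simp; ring

lemma norm_of_inner {u : E3} (h : ⟪u, u⟫ = 1) : ‖u‖ = 1 := by
  rw [real_inner_self_eq_norm_sq] at h
  nlinarith [norm_nonneg u]
lemma norm_e (t : ℝ) : ‖eV t‖ = 1 := norm_of_inner (e_e t)
lemma norm_n (t : ℝ) : ‖nV t‖ = 1 := norm_of_inner (n_n t)
lemma norm_b (t : ℝ) : ‖bV t‖ = 1 := norm_of_inner (b_b t)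

lemma cross_en (t : ℝ) : cross3 (eV t) (nV t) = bV t := by
  have h2 := ne_of_gt (pos1 t)
  ext i
  fin_cases i
  · simp [cross3, bV, nV, eV]; field_simp; linear_combination t^2 * s2
  · simp [cross3, bV, nV, eV]; field_simp; ring
  · simp [cross3, bV, nV, eV]; field_simp; linear_combination t^2 * s2

lemma cross_neg (u v : E3) : cross3 (-u) v = - cross3 u v := by
  ext i
  fin_cases i <;> simp [cross3] <;> ring

lemma frame_zero (t : ℝ) (u : E3) (h1 : ⟪u, eV t⟫ = 0) (h2 : ⟪u, nV t⟫ = 0)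
    (h3 : ⟪u, bV t⟫ = 0) : u = 0 := by
  have h4 := ne_of_gt (pos1 t)
  have hs := s2
  rw [inner3] at h1 h2 h3
  simp [eV] at h1
  simp [nV] at h2
  simp [bV] at h3
  field_simp at h1 h2 h3
  have hp : (1 + t^2)^2 ≠ 0 := by positivity
  ext i
  fin_cases i
  · have : (1 + t^2)^2 * u 0 = 0 := by
      linear_combination h1 + (-√2 * t) * h2 + t^2 * h3 + (-t^2 * u 0 + t^2 * u 2) * hs
    simpa [h4] using this
  · have : (1 + t^2)^2 * u 1 = 0 := by
      linear_combination √2 * t * h1 + (1 - t^2) * h2 - √2 * t * h3 + (-2 * t^2 * u 1) * hs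
    simpa [h4] using this
  · have : (1 + t^2)^2 * u 2 = 0 := by
      linear_combination t^2 * h1 + (√2 * t) * h2 + h3 + (t^2 * u 0 - t^2 * u 2) * hs
    simpa [h4] using this

lemma tang_c₀ : tang c₀ = eV := funext fun t => (hc₀ t).deriv
lemma deriv_c₀ : deriv c₀ = eV := funext fun t => (hc₀ t).deriv
lemma curv_c₀ (t : ℝ) : curv c₀ t = √2 / (1 + t ^ 2) := by
  have := pos1 t
  rw [curv, deriv_c₀, (heV t).deriv, norm_smul, norm_n, mul_one, Real.norm_eq_abs, abs_of_pos]
  positivity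
lemma pnorm_c₀ : pnorm c₀ = nV := by
  funext t
  have := pos1 t
  rw [pnorm, curv_c₀, deriv_c₀, (heV t).deriv, smul_smul, inv_mul_cancel₀, one_smul]
  positivity
lemma binorm_c₀ : binorm c₀ = bV := by
  funext t
  rw [binorm, tang_c₀, pnorm_c₀, cross_en]
lemma tors_c₀ (t : ℝ) : tors c₀ t = √2 / (1 + t ^ 2) := by
  rw [tors, pnorm_c₀, binorm_c₀, (hnV t).deriv, inner_smul_left, inner_sub_left, b_b, e_b]
  simp

lemma hrev {f : ℝ → E3} {f' : E3} {t : ℝ} (h : HasDerivAt f f' (1 - t)) :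
    HasDerivAt (fun s => f (1 - s)) (-f') t := by
  have h1 : HasDerivAt (fun s : ℝ => 1 - s) (-1) t := by
    simpa using (hasDerivAt_id t).const_sub 1
  have := HasDerivAt.scomp t h h1
  rw [neg_one_smul] at this
  exact this

lemma tang_c₀r : tang c₀r = fun t => - eV (1 - t) :=
  funext fun t => (hrev (hc₀ (1 - t))).deriv
lemma deriv_c₀r : deriv c₀r = fun t => - eV (1 - t) := tang_c₀r
lemma deriv2_c₀r (t : ℝ) : deriv (deriv c₀r) t = (√2 / (1 + (1 - t) ^ 2)) • nV (1 - t) := by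
  have := (hrev (heV (1 - t))).neg.deriv
  rw [neg_neg] at this
  rw [deriv_c₀r]
  exact this
lemma curv_c₀r (t : ℝ) : curv c₀r t = √2 / (1 + (1 - t) ^ 2) := by
  have := pos1 (1 - t)
  rw [curv, deriv2_c₀r, norm_smul, norm_n, mul_one, Real.norm_eq_abs, abs_of_pos]
  positivity
lemma pnorm_c₀r : pnorm c₀r = fun t => nV (1 - t) := by
  funext t
  have := pos1 (1 - t)
  rw [pnorm, curv_c₀r, deriv2_c₀r, smul_smul, inv_mul_cancel₀, one_smul]
  positivity
lemma binorm_c₀r : binorm c₀r = fun t => - bV (1 - t) := by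
  funext t
  rw [binorm, tang_c₀r, pnorm_c₀r, cross_neg, cross_en]
lemma tors_c₀r (t : ℝ) : tors c₀r t = √2 / (1 + (1 - t) ^ 2) := by
  rw [tors, pnorm_c₀r, binorm_c₀r, (hrev (hnV (1 - t))).deriv, inner_neg_neg, inner_smul_left,
    inner_sub_left, b_b, e_b]
  simp

/-- The parameter interval. -/
abbrev I0 : Set ℝ := Icc (1/10 : ℝ) (9/10)

lemma eV_lip (s t : ℝ) : ‖eV s - eV t‖ ≤ 2 * |s - t| := by
  have := Convex.norm_image_sub_le_of_norm_hasDerivWithin_le (f := eV)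
    (f' := fun t => (√2 / (1 + t ^ 2)) • nV t) (s := univ) (C := 2) (x := t) (y := s)
    (fun x _ => (heV x).hasDerivWithinAt) (fun x _ => by
      have h1 := pos1 x
      have h2 : √2 ≤ 2 := by
        rw [Real.sqrt_le_left (by norm_num)]; norm_num
      rw [norm_smul, norm_n, mul_one, Real.norm_eq_abs, abs_of_nonneg (by positivity),
        div_le_iff₀ h1]
      nlinarith [sq_nonneg x]) convex_univ (mem_univ _) (mem_univ _)
  simpa using this

lemma taylor (s t : ℝ) : ‖c₀ s - c₀ t - (s - t) • eV t‖ ≤ 2 * |s - t| ^ 2 := by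
  have := Convex.norm_image_sub_le_of_norm_hasDerivWithin_le (f := fun x => c₀ x - x • eV t)
    (f' := fun x => eV x - (1 : ℝ) • eV t) (s := uIcc t s) (C := 2 * |s - t|) (x := t) (y := s)
    (fun x _ => ((hc₀ x).sub ((hasDerivAt_id x).smul_const _)).hasDerivWithinAt) (fun x hx => by
      rw [one_smul]
      refine (eV_lip x t).trans ?_
      have := abs_sub_left_of_mem_uIcc hx
      linarith) (convex_uIcc _ _) left_mem_uIcc right_mem_uIcc
  have h2 : c₀ s - c₀ t - (s - t) • eV t = c₀ s - s • eV t - (c₀ t - t • eV t) := by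
    rw [sub_smul]; abel
  rw [h2]
  refine this.trans (le_of_eq ?_)
  rw [Real.norm_eq_abs]; ring

lemma chord (s t : ℝ) : |s - t| ≤ 2 * ‖c₀ s - c₀ t‖ := by
  have h0 := PiLp.norm_apply_le (c₀ s - c₀ t) 0
  have h2 := PiLp.norm_apply_le (c₀ s - c₀ t) 2
  have h : s - t = (c₀ s - c₀ t) 0 + (c₀ s - c₀ t) 2 := by
    simp [c₀]; ring
  rw [h]
  rw [Real.norm_eq_abs] at h0 h2
  have := abs_add_le ((c₀ s - c₀ t) 0) ((c₀ s - c₀ t) 2)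
  linarith

/-- Ruling used at parameter `v`. -/
def ZZ (X Y : ℝ → E3) (v t : ℝ) : E3 := if 0 ≤ v then X t else Y t

/-- The fold map. -/
def FM (X Y : ℝ → E3) (t v : ℝ) : E3 := c₀ t + v • ZZ X Y v t

/-- The folded strip. -/
def QQ (X Y : ℝ → E3) (ε : ℝ) : Set E3 := {p | ∃ t ∈ I0, ∃ v : ℝ, |v| < ε ∧ p = FM X Y t v}

/-- Regular folding data. -/
structure IsFold (X Y : ℝ → E3) (k : ℝ → ℝ) : Prop where
  dX : DifferentiableOn ℝ X I0
  dY : DifferentiableOn ℝ Y I0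
  lip : ∃ L : ℝ, 0 ≤ L ∧ ∀ s ∈ I0, ∀ t ∈ I0, ‖X s - X t‖ ≤ L * |s - t| ∧ ‖Y s - Y t‖ ≤ L * |s - t|
  nX : ∀ t ∈ I0, ‖X t‖ = 1
  nY : ∀ t ∈ I0, ‖Y t‖ = 1
  low : ∃ m : ℝ, 0 < m ∧ ∀ t ∈ I0, m ≤ ⟪X t, nV t⟫ ∧ m ≤ ⟪Y t, nV t⟫
  kX : ∀ t ∈ I0, ⟪X t, bV t⟫ = k t * ⟪X t, nV t⟫
  kY : ∀ t ∈ I0, ⟪Y t, bV t⟫ = - k t * ⟪Y t, nV t⟫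
  k0 : ∀ t ∈ I0, k t ≠ 0

lemma ZZ_lip {X Y : ℝ → E3} {L : ℝ} (hL : ∀ s ∈ I0, ∀ t ∈ I0,
    ‖X s - X t‖ ≤ L * |s - t| ∧ ‖Y s - Y t‖ ≤ L * |s - t|) (v : ℝ) {s t : ℝ} (hs : s ∈ I0)
    (ht : t ∈ I0) : ‖ZZ X Y v s - ZZ X Y v t‖ ≤ L * |s - t| := by
  unfold ZZ
  split_ifs
  · exact (hL s hs t ht).1
  · exact (hL s hs t ht).2

lemma ZZ_contr {X Y : ℝ → E3} {k : ℝ → ℝ} (F : IsFold X Y k) {t : ℝ} (ht : t ∈ I0) (v w : ℝ) :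
    ‖v • ZZ X Y v t - w • ZZ X Y w t‖ ≤ |v - w| := by
  have hX := F.nX t ht
  have hY := F.nY t ht
  unfold ZZ
  split_ifs with h1 h2 h2
  · rw [← sub_smul, norm_smul, hX]; simp
  · refine (norm_sub_le _ _).trans ?_
    rw [norm_smul, norm_smul, hX, hY, Real.norm_eq_abs, Real.norm_eq_abs, abs_of_nonneg h1,
      abs_of_neg (not_le.1 h2), abs_of_nonneg (by linarith)]
    linarith
  · refine (norm_sub_le _ _).trans ?_
    rw [norm_smul, norm_smul, hX, hY, Real.norm_eq_abs, Real.norm_eq_abs, abs_of_nonneg h2,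
      abs_of_neg (not_le.1 h1), abs_of_neg (by linarith)]
    linarith
  · rw [← sub_smul, norm_smul, hY]; simp

lemma ZZ_mono {X Y : ℝ → E3} {m t : ℝ} (hm : m ≤ ⟪X t, nV t⟫ ∧ m ≤ ⟪Y t, nV t⟫)
    (v w : ℝ) :
    m * |v - w| ≤ |⟪v • ZZ X Y v t - w • ZZ X Y w t, nV t⟫| := by
  obtain ⟨hX, hY⟩ := hm
  have key : ∀ v w : ℝ, w ≤ v → m * |v - w| ≤ |⟪v • ZZ X Y v t - w • ZZ X Y w t, nV t⟫| := by
    intro v w hvw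
    rw [abs_of_nonneg (by linarith : 0 ≤ v - w)]
    refine le_trans ?_ (le_abs_self _)
    rw [inner_sub_left, inner_smul_left, inner_smul_left]
    simp only [conj_trivial]
    unfold ZZ
    split_ifs with h1 h2 h2
    · nlinarith
    · nlinarith
    · linarith
    · nlinarith
  rcases le_total w v with h | h
  · exact key v w h
  · have := key w v h
    rw [abs_sub_comm, ← abs_neg ⟪_, _⟫, ← inner_neg_left, neg_sub]
    exact this

lemma bilip {X Y : ℝ → E3} {k : ℝ → ℝ} (F : IsFold X Y k) :
    ∃ ε₁ > 0, ∃ C > 0, ∀ t ∈ I0, ∀ s ∈ I0, ∀ v w : ℝ, |v| < ε₁ → |w| < ε₁ →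
      |t - s| ≤ C * ‖FM X Y t v - FM X Y s w‖ ∧ |v - w| ≤ C * ‖FM X Y t v - FM X Y s w‖ := by
  obtain ⟨L, hL0, hL⟩ := F.lip
  obtain ⟨m, hm0, hm⟩ := F.low
  have hm1 : m ≤ 1 := by
    have h0 : (1/2 : ℝ) ∈ I0 := by constructor <;> norm_num
    have := (hm _ h0).1.trans (real_inner_le_norm _ _)
    rw [norm_n, F.nX _ h0] at this
    linarith
  refine ⟨m / (512 * (1 + L)), by positivity, 4 * (1 + 1 / m), by positivity, ?_⟩
  intro t ht s hs v w hv hw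
  set D := FM X Y t v - FM X Y s w with hD
  set ε := m / (512 * (1 + L)) with hε
  have hε1 : ε * (1 + L) = m / 512 := by rw [hε]; field_simp
  have hε0 : 0 < ε := by positivity
  have hw' : |w| * L ≤ m / 512 := by nlinarith [abs_nonneg w]
  have hεm : ε ≤ m / 512 := by nlinarith
  have hdec : D = (c₀ t - c₀ s) + (v • ZZ X Y v t - w • ZZ X Y w t)
      + w • (ZZ X Y w t - ZZ X Y w s) := by
    rw [hD, FM, FM, smul_sub]; abel
  have hx0 := abs_nonneg (t - s)
  have hW : ‖w • (ZZ X Y w t - ZZ X Y w s)‖ ≤ m / 512 * |t - s| := by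
    rw [norm_smul, Real.norm_eq_abs]
    have := ZZ_lip hL w ht hs
    calc |w| * ‖ZZ X Y w t - ZZ X Y w s‖ ≤ |w| * (L * |t - s|) := by gcongr
      _ = |w| * L * |t - s| := by ring
      _ ≤ _ := by gcongr
  have hZ := ZZ_contr F ht v w
  have h1 : |t - s| / 2 ≤ ‖D‖ + |v - w| + m / 512 * |t - s| := by
    have h := chord t s
    have : c₀ t - c₀ s = D - (v • ZZ X Y v t - w • ZZ X Y w t)
      - w • (ZZ X Y w t - ZZ X Y w s) := by rw [hdec]; abel
    have h3 : ‖c₀ t - c₀ s‖ ≤ ‖D‖ + ‖v • ZZ X Y v t - w • ZZ X Y w t‖ +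
        ‖w • (ZZ X Y w t - ZZ X Y w s)‖ := by
      rw [this]
      exact (norm_sub_le _ _).trans (by gcongr; exact norm_sub_le _ _)
    linarith
  have h2 : m * |v - w| ≤ ‖D‖ + 2 * |t - s| ^ 2 + m / 512 * |t - s| := by
    refine (ZZ_mono (hm t ht) v w).trans ?_
    have : v • ZZ X Y v t - w • ZZ X Y w t = D + (c₀ s - c₀ t - (s - t) • eV t)
      - w • (ZZ X Y w t - ZZ X Y w s) + (s - t) • eV t := by rw [hdec]; abel
    rw [this, inner_add_left, inner_smul_left, e_n, mul_zero, add_zero]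
    refine (abs_real_inner_le_norm _ _).trans ?_
    rw [norm_n, mul_one]
    refine (norm_sub_le _ _).trans ?_
    refine add_le_add ?_ hW
    refine (norm_add_le _ _).trans ?_
    have := taylor s t
    rw [abs_sub_comm s t] at this
    linarith
  have hvw : |v - w| ≤ 2 * ε := by
    have := abs_sub v w
    linarith
  have hD0 := norm_nonneg D
  generalize ‖D‖ = d at *
  generalize |t - s| = x at *
  generalize |v - w| = y at *
  have hmi : 1 ≤ 1 / m := by rw [le_div_iff₀ hm0]; linarith
  have hmx : m * x ≤ x := by nlinarith
  have hmd : d ≤ 1 / m * d := by nlinarith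
  rcases le_or_gt x (m / 32) with hx | hx
  · have h3 : m * y ≤ d + m * (x / 8) := by nlinarith
    have h4 : y ≤ 1 / m * d + x / 8 := by
      have : m * y ≤ m * (1 / m * d + x / 8) := by
        have : m * (1 / m * d + x / 8) = d + m * (x / 8) := by field_simp
        linarith
      exact le_of_mul_le_mul_left this hm0
    constructor <;> nlinarith
  · constructor <;> nlinarith

/-- One-sided tangent direction. -/
def Tan (S : Set E3) (p ζ : E3) : Prop :=
  ∀ η > 0, ∀ r > 0, ∃ h : ℝ, 0 < h ∧ h < r ∧ ∃ q ∈ S, ‖q - p - h • ζ‖ ≤ η * h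

/-- `G` vanishes to first order along `S` at `p`. -/
def Nul (S : Set E3) (p : E3) (G : E3 → ℝ) : Prop :=
  ∀ η > 0, ∃ r > 0, ∀ q ∈ S, ‖q - p‖ < r → |G (q - p)| ≤ η * ‖q - p‖

lemma tan_nul {S : Set E3} {p ζ : E3} {G : E3 → ℝ} {M : ℝ} (hM : 0 ≤ M)
    (hG : ∀ u w, |G u - G w| ≤ M * ‖u - w‖) (hh : ∀ h : ℝ, 0 < h → G (h • ζ) = h * G ζ)
    (hT : Tan S p ζ) (hN : Nul S p G) : G ζ = 0 := by
  have key : ∀ η : ℝ, 0 < η → η ≤ 1 → |G ζ| ≤ η * (‖ζ‖ + 1 + M) := by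
    intro η hη hη1
    obtain ⟨r, hr, hN⟩ := hN η hη
    have hz := norm_nonneg ζ
    obtain ⟨h, h0, h1, q, hq, hqp⟩ := hT η hη (r / (‖ζ‖ + 1)) (by positivity)
    rw [lt_div_iff₀ (by positivity)] at h1
    have e1 : ‖q - p‖ ≤ h * (‖ζ‖ + η) := by
      have : q - p = (q - p - h • ζ) + h • ζ := by abel
      rw [this]
      refine (norm_add_le _ _).trans ?_
      rw [norm_smul, Real.norm_eq_abs, abs_of_pos h0]
      linarith
    have e2 := hN q hq (by nlinarith)
    have e3 := hG (h • ζ) (q - p)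
    rw [norm_sub_rev] at e3
    have e4 : |G (h • ζ)| ≤ |G (q - p)| + |G (h • ζ) - G (q - p)| := by
      have := abs_add_le (G (q - p)) (G (h • ζ) - G (q - p))
      simpa using this
    rw [hh h h0, abs_mul, abs_of_pos h0, ← hh h h0] at e4
    have e5 : M * ‖q - p - h • ζ‖ ≤ M * (η * h) := by gcongr
    have e6 : η * ‖q - p‖ ≤ η * (h * (‖ζ‖ + η)) := by gcongr
    have e7 : h * |G ζ| ≤ h * (η * (‖ζ‖ + 1 + M)) := by
      have : η * (h * η) ≤ η * (h * 1) := by gcongr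
      linarith
    exact le_of_mul_le_mul_left e7 h0
  by_contra hne
  have hp : 0 < |G ζ| := abs_pos.2 hne
  have hK : 0 < ‖ζ‖ + 1 + M := by positivity
  have := key (min 1 (|G ζ| / (2 * (‖ζ‖ + 1 + M)))) (by positivity) (min_le_left _ _)
  have h2 : min 1 (|G ζ| / (2 * (‖ζ‖ + 1 + M))) * (‖ζ‖ + 1 + M) ≤ |G ζ| / 2 := by
    refine (mul_le_mul_of_nonneg_right (min_le_right _ _) hK.le).trans (le_of_eq ?_)
    field_simp
  linarith

lemma G_tan {S : Set E3} {p ζ b n : E3} {k : ℝ} (hb : ‖b‖ = 1) (hn : ‖n‖ = 1)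
    (hT : Tan S p ζ) (hN : Nul S p (fun u => ⟪u, b⟫ - k * |⟪u, n⟫|)) :
    ⟪ζ, b⟫ = k * |⟪ζ, n⟫| := by
  have hL : ∀ u w : E3, |(⟪u, b⟫ - k * |⟪u, n⟫|) - (⟪w, b⟫ - k * |⟪w, n⟫|)| ≤ (1 + |k|) * ‖u - w‖ := by
    intro u w
    have e1 : |⟪u - w, b⟫| ≤ ‖u - w‖ := by
      simpa [hb] using abs_real_inner_le_norm (u - w) b
    have e2 : |⟪u - w, n⟫| ≤ ‖u - w‖ := by
      simpa [hn] using abs_real_inner_le_norm (u - w) n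
    have e3 := abs_abs_sub_abs_le ⟪u, n⟫ ⟪w, n⟫
    rw [← inner_sub_left] at e3
    have e4 : (⟪u, b⟫ - k * |⟪u, n⟫|) - (⟪w, b⟫ - k * |⟪w, n⟫|)
      = ⟪u - w, b⟫ - k * (|⟪u, n⟫| - |⟪w, n⟫|) := by rw [inner_sub_left]; ring
    rw [e4]
    refine (abs_sub _ _).trans ?_
    rw [abs_mul]
    have : |k| * |(|⟪u, n⟫| - |⟪w, n⟫|)| ≤ |k| * ‖u - w‖ := by
      gcongr
      linarith
    linarith
  have := tan_nul (M := 1 + |k|) (by positivity) hL (fun h h0 => by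
    simp only [inner_smul_left, conj_trivial, abs_mul, abs_of_pos h0]; ring) hT hN
  linarith

lemma nul_crease {X Y : ℝ → E3} {k : ℝ → ℝ} (F : IsFold X Y k) {ε₁ C : ℝ} (hC : 0 < C)
    (hε₁ : 0 < ε₁)
    (hb : ∀ t ∈ I0, ∀ s ∈ I0, ∀ v w : ℝ, |v| < ε₁ → |w| < ε₁ →
      |t - s| ≤ C * ‖FM X Y t v - FM X Y s w‖ ∧ |v - w| ≤ C * ‖FM X Y t v - FM X Y s w‖)
    {s : ℝ} (hs : s ∈ I0) :
    Nul (QQ X Y ε₁) (c₀ s) (fun u => ⟪u, bV s⟫ - k s * |⟪u, nV s⟫|) := by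
  obtain ⟨L, hL0, hL⟩ := F.lip
  intro η hη
  set K := (1 + |k s|) * ((2 + L) * C ^ 2) with hK
  have hK0 : 0 < K := by positivity
  refine ⟨η / K, by positivity, ?_⟩
  rintro q ⟨t, ht, v, hv, rfl⟩ hq
  have h := hb t ht s hs v 0 hv (by simpa using hε₁)
  have hz : FM X Y s 0 = c₀ s := by simp [FM]
  rw [hz, sub_zero] at h
  obtain ⟨h1, h2⟩ := h
  set d := ‖FM X Y t v - c₀ s‖ with hd
  have hd0 : 0 ≤ d := norm_nonneg _
  set err := (c₀ t - c₀ s - (t - s) • eV s) + v • (ZZ X Y v t - ZZ X Y v s) with herr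
  have hdec : FM X Y t v - c₀ s = ((t - s) • eV s + v • ZZ X Y v s) + err := by
    rw [herr, FM, smul_sub]; abel
  have herr' : ‖err‖ ≤ (2 + L) * C ^ 2 * d ^ 2 := by
    have e1 := taylor t s
    have e2 := ZZ_lip hL v ht hs
    have e3 : ‖v • (ZZ X Y v t - ZZ X Y v s)‖ ≤ (C * d) * (L * (C * d)) := by
      rw [norm_smul, Real.norm_eq_abs]
      have : L * |t - s| ≤ L * (C * d) := by gcongr
      gcongr
      linarith
    have e4 : |t - s| ^ 2 ≤ (C * d) ^ 2 := by gcongr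
    have := norm_add_le (c₀ t - c₀ s - (t - s) • eV s) (v • (ZZ X Y v t - ZZ X Y v s))
    rw [← herr] at this
    nlinarith
  have g0 : ∀ u : ℝ, ⟪u • eV s + v • ZZ X Y v s, bV s⟫ = k s * |⟪u • eV s + v • ZZ X Y v s, nV s⟫| := by
    intro u
    simp only [inner_add_left, inner_smul_left, e_b, e_n, conj_trivial, mul_zero, zero_add]
    obtain ⟨m, hm0, hm⟩ := F.low
    obtain ⟨m1, m2⟩ := hm s hs
    unfold ZZ
    split_ifs with hv0
    · rw [F.kX s hs, abs_of_nonneg (mul_nonneg hv0 (by linarith))]; ring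
    · rw [F.kY s hs, abs_of_nonpos (mul_nonpos_of_nonpos_of_nonneg (by linarith) (by linarith))]; ring
  have e1 : |⟪err, bV s⟫| ≤ ‖err‖ := by
    simpa [norm_b] using abs_real_inner_le_norm err (bV s)
  have e2 : |⟪err, nV s⟫| ≤ ‖err‖ := by
    simpa [norm_n] using abs_real_inner_le_norm err (nV s)
  have g1 := g0 (t - s)
  simp only
  rw [hdec]
  generalize (t - s) • eV s + v • ZZ X Y v s = u at *
  have e3 := abs_abs_sub_abs_le ⟪u + err, nV s⟫ ⟪u, nV s⟫
  rw [← inner_sub_left, add_sub_cancel_left] at e3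
  have e4 : ⟪u + err, bV s⟫ - k s * |⟪u + err, nV s⟫| = ⟪err, bV s⟫ -
      k s * (|⟪u + err, nV s⟫| - |⟪u, nV s⟫|) := by
    rw [inner_add_left, g1]; ring
  rw [e4]
  refine (abs_sub _ _).trans ?_
  rw [abs_mul]
  have e5 : |k s| * |(|⟪u + err, nV s⟫| - |⟪u, nV s⟫|)| ≤ |k s| * ‖err‖ := by
    gcongr
    linarith
  rw [lt_div_iff₀ hK0] at hq
  have e6 : (1 + |k s|) * ‖err‖ ≤ (1 + |k s|) * ((2 + L) * C ^ 2 * d ^ 2) := by gcongr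
  have e7 : (1 + |k s|) * ((2 + L) * C ^ 2 * d ^ 2) = (d * K) * d := by rw [hK]; ring
  have e8 : d * K * d ≤ η * d := by gcongr
  linarith

lemma exists_perp (u w : E3) : ∃ N : E3, N ≠ 0 ∧ ⟪N, u⟫ = 0 ∧ ⟪N, w⟫ = 0 := by
  have h1 := Submodule.finrank_add_finrank_orthogonal (Submodule.span ℝ {u, w})
  have h2 : Module.finrank ℝ (Submodule.span ℝ ({u, w} : Set E3)) ≤ 2 := by
    classical
    have := finrank_span_finset_le_card (R := ℝ) ({u, w} : Finset E3)
    have h3 := Finset.card_le_two (a := u) (b := w)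
    rw [Set.finrank] at this
    have h4 : ((({u, w} : Finset E3)) : Set E3) = {u, w} := by simp
    rw [h4] at this
    exact this.trans h3
  have h3 : Module.finrank ℝ E3 = 3 := by simp
  have h4 : (Submodule.span ℝ ({u, w} : Set E3))ᗮ ≠ ⊥ := by
    intro h
    rw [h, finrank_bot] at h1
    omega
  obtain ⟨N, hN, hN0⟩ := Submodule.exists_mem_ne_zero_of_ne_bot h4
  rw [Submodule.mem_orthogonal'] at hN
  exact ⟨N, hN0, hN u (Submodule.subset_span (by simp)), hN w (Submodule.subset_span (by simp))⟩

lemma nul_off {X Y : ℝ → E3} {k : ℝ → ℝ} (F : IsFold X Y k) {ε₁ C : ℝ} (hC : 0 < C)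
    (hb : ∀ t ∈ I0, ∀ s ∈ I0, ∀ v w : ℝ, |v| < ε₁ → |w| < ε₁ →
      |t - s| ≤ C * ‖FM X Y t v - FM X Y s w‖ ∧ |v - w| ≤ C * ‖FM X Y t v - FM X Y s w‖)
    {s v₀ : ℝ} (hs : s ∈ I0) (hv₀ : |v₀| < ε₁) (hv0 : v₀ ≠ 0) :
    ∃ N : E3, N ≠ 0 ∧ Nul (QQ X Y ε₁) (FM X Y s v₀) (fun u => ⟪N, u⟫) := by
  obtain ⟨L, hL0, hL⟩ := F.lip
  have hdZ : DifferentiableWithinAt ℝ (ZZ X Y v₀) I0 s := by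
    rcases le_or_gt 0 v₀ with h | h
    · have : ZZ X Y v₀ = X := by funext t; simp [ZZ, h]
      rw [this]; exact F.dX s hs
    · have : ZZ X Y v₀ = Y := by funext t; simp [ZZ, not_le.2 h]
      rw [this]; exact F.dY s hs
  set Z := ZZ X Y v₀ with hZ
  have hd := ((hc₀ s).hasDerivWithinAt (s := I0)).add (hdZ.hasDerivWithinAt.const_smul v₀)
  set W := eV s + v₀ • derivWithin Z I0 s
  obtain ⟨N, hN0, hNW, hNZ⟩ := exists_perp W (Z s)
  refine ⟨N, hN0, ?_⟩
  intro η hη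
  have hNp : 0 < ‖N‖ := norm_pos_iff.2 hN0
  set η' := η / (2 * ‖N‖ * C) with hη'
  have hη'0 : 0 < η' := by positivity
  have hlo := hd.isLittleO.def hη'0
  rw [Filter.Eventually, Metric.mem_nhdsWithin_iff] at hlo
  obtain ⟨r, hr, hlo⟩ := hlo
  set K := ‖N‖ * L * C ^ 2 + 1 with hK
  have hK0 : 0 < K := by positivity
  refine ⟨min (r / C) (min (|v₀| / C) (η / (2 * K))), by positivity, ?_⟩
  rintro q ⟨t, ht, v, hv, rfl⟩ hq
  obtain ⟨h1, h2⟩ := hb t ht s hs v v₀ hv hv₀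
  have hq1 := hq.trans_le (min_le_left _ _)
  have hq2 := hq.trans_le ((min_le_right _ _).trans (min_le_left _ _))
  have hq3 := hq.trans_le ((min_le_right _ _).trans (min_le_right _ _))
  set d := ‖FM X Y t v - FM X Y s v₀‖ with hd'
  have hd0 : 0 ≤ d := norm_nonneg _
  rw [lt_div_iff₀ (by positivity)] at hq1 hq2 hq3
  have hZv : ZZ X Y v t = Z t := by
    have h5 : |v - v₀| < |v₀| := by linarith
    rw [hZ]
    unfold ZZ
    rcases le_or_gt 0 v₀ with h | h
    · rw [abs_of_nonneg h, abs_lt] at h5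
      rw [if_pos (by linarith), if_pos h]
    · rw [abs_of_neg h, abs_lt] at h5
      rw [if_neg (by linarith), if_neg (by linarith)]
  have hmem : t ∈ Metric.ball s r ∩ I0 := by
    refine ⟨?_, ht⟩
    rw [Metric.mem_ball, Real.dist_eq]
    linarith
  have e1 := hlo hmem
  simp only [mem_ofPred_eq, Pi.add_apply, Pi.smul_apply] at e1
  set A := c₀ t + v₀ • Z t - (c₀ s + v₀ • Z s) - (t - s) • W with hA
  have hdec : FM X Y t v - FM X Y s v₀ = A + (t - s) • W + (v - v₀) • (Z t - Z s)
      + (v - v₀) • Z s := by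
    rw [FM, FM, hZv, hA, smul_sub, sub_smul, sub_smul]; abel
  have e2 : ‖Z t - Z s‖ ≤ L * |t - s| := ZZ_lip hL v₀ ht hs
  simp only
  rw [hdec, inner_add_right, inner_add_right, inner_add_right, inner_smul_right, inner_smul_right,
    inner_smul_right, hNW, hNZ, mul_zero, mul_zero, add_zero, add_zero]
  refine (abs_add_le _ _).trans ?_
  have f1 : |⟪N, A⟫| ≤ ‖N‖ * (η' * (C * d)) := by
    refine (abs_real_inner_le_norm _ _).trans ?_
    gcongr
    refine e1.trans ?_
    rw [Real.norm_eq_abs]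
    gcongr
  have f2 : |(v - v₀) * ⟪N, Z t - Z s⟫| ≤ (C * d) * (‖N‖ * (L * (C * d))) := by
    rw [abs_mul]
    have : |⟪N, Z t - Z s⟫| ≤ ‖N‖ * (L * (C * d)) := by
      refine (abs_real_inner_le_norm _ _).trans ?_
      gcongr
      refine e2.trans ?_
      gcongr
    gcongr
  have f3 : ‖N‖ * (η' * (C * d)) = η / 2 * d := by rw [hη']; field_simp
  have f4 : (C * d) * (‖N‖ * (L * (C * d))) ≤ η / 2 * d := by
    have : (C * d) * (‖N‖ * (L * (C * d))) = (K - 1) * d * d := by rw [hK]; ring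
    rw [this]
    have : (K - 1) * d ≤ η / 2 := by nlinarith
    gcongr
  linarith

lemma I0_bd {t : ℝ} (h : t ∈ I0) : 1/10 ≤ t ∧ t ≤ 9/10 := h

lemma tan_X {X Y : ℝ → E3} {δ t : ℝ} (hδ : 0 < δ) (ht : t ∈ I0) :
    Tan (QQ X Y δ) (c₀ t) (X t) := by
  intro η hη r hr
  have h0 : 0 < min r δ / 2 := by positivity
  have h1 := min_le_left r δ
  have h2 := min_le_right r δ
  refine ⟨min r δ / 2, h0, by linarith, FM X Y t (min r δ / 2),
    ⟨t, ht, _, ?_, rfl⟩, ?_⟩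
  · rw [abs_of_pos h0]; linarith
  · simp [FM, ZZ, h0.le]; positivity

lemma tan_Y {X Y : ℝ → E3} {δ t : ℝ} (hδ : 0 < δ) (ht : t ∈ I0) :
    Tan (QQ X Y δ) (c₀ t) (-Y t) := by
  intro η hη r hr
  have h0 : 0 < min r δ / 2 := by positivity
  have h1 := min_le_left r δ
  have h2 := min_le_right r δ
  refine ⟨min r δ / 2, h0, by linarith, FM X Y t (-(min r δ / 2)),
    ⟨t, ht, _, ?_, rfl⟩, ?_⟩
  · rw [abs_neg, abs_of_pos h0]; linarith
  · have : ¬ (0 ≤ -(min r δ / 2)) := by linarith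
    rw [FM, ZZ, if_neg this]
    simp; positivity

lemma crease_mem {X Y : ℝ → E3} {δ t : ℝ} (hδ : 0 < δ) (ht : t ∈ I0) : c₀ t ∈ QQ X Y δ :=
  ⟨t, ht, 0, by simpa using hδ, by simp [FM]⟩

lemma tan_e {X Y : ℝ → E3} {δ t : ℝ} (hδ : 0 < δ) (ht : t ∈ I0) :
    ∃ σ : ℝ, σ ≠ 0 ∧ Tan (QQ X Y δ) (c₀ t) (σ • eV t) := by
  obtain ⟨ha, hb⟩ := I0_bd ht
  rcases lt_or_ge t (1/2) with h | h
  · refine ⟨1, one_ne_zero, ?_⟩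
    intro η hη r hr
    set h' := min (r / 2) (min (1/4) (η / 2)) with hh
    have h0 : 0 < h' := by positivity
    have h1 : h' ≤ r / 2 := min_le_left _ _
    have h2 : h' ≤ 1/4 := (min_le_right _ _).trans (min_le_left _ _)
    have h3 : h' ≤ η / 2 := (min_le_right _ _).trans (min_le_right _ _)
    refine ⟨h', h0, by linarith, c₀ (t + h'), crease_mem hδ ⟨by linarith, by linarith⟩, ?_⟩
    have := taylor (t + h') t
    rw [add_sub_cancel_left, abs_of_pos h0] at this
    rw [one_smul]
    nlinarith
  · refine ⟨-1, by norm_num, ?_⟩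
    intro η hη r hr
    set h' := min (r / 2) (min (1/4) (η / 2)) with hh
    have h0 : 0 < h' := by positivity
    have h1 : h' ≤ r / 2 := min_le_left _ _
    have h2 : h' ≤ 1/4 := (min_le_right _ _).trans (min_le_left _ _)
    have h3 : h' ≤ η / 2 := (min_le_right _ _).trans (min_le_right _ _)
    refine ⟨h', h0, by linarith, c₀ (t - h'), crease_mem hδ ⟨by linarith, by linarith⟩, ?_⟩
    have := taylor (t - h') t
    have e : t - h' - t = -h' := by ring
    rw [e, abs_neg, abs_of_pos h0] at this
    rw [smul_smul, mul_neg_one]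
    nlinarith

lemma tan_map {S S' : Set E3} {T : E3 ≃ᵢ E3} {A : E3 ≃ₗᵢ[ℝ] E3}
    (hA : ∀ x y, T x - T y = A (x - y)) (hS : T '' S ⊆ S') {p ζ : E3} (h : Tan S p ζ) :
    Tan S' (T p) (A ζ) := by
  intro η hη r hr
  obtain ⟨h', h0, h1, q, hq, hqp⟩ := h η hη r hr
  refine ⟨h', h0, h1, T q, hS ⟨q, hq, rfl⟩, ?_⟩
  rw [hA, ← map_smul, ← map_sub, A.norm_map]
  exact hqp

lemma exists_lin (T : E3 ≃ᵢ E3) : ∃ A : E3 ≃ₗᵢ[ℝ] E3, ∀ x y, T x - T y = A (x - y) := by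
  refine ⟨T.toRealAffineIsometryEquiv.linearIsometryEquiv, fun x y => ?_⟩
  have := T.toRealAffineIsometryEquiv.map_vsub x y
  simpa using this.symm

lemma lin_tan {S : Set E3} {p ζ N : E3} (hT : Tan S p ζ) (hN : Nul S p (fun u => ⟪N, u⟫)) :
    ⟪N, ζ⟫ = 0 := by
  refine tan_nul (G := fun u => ⟪N, u⟫) (M := ‖N‖) (norm_nonneg _) ?_ ?_ hT hN
  · intro u w
    rw [← inner_sub_right]
    exact abs_real_inner_le_norm _ _
  · intro h _
    simp only [inner_smul_right]

lemma ruling_decomp (t : ℝ) (u : E3) :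
    u = ⟪u, eV t⟫ • eV t + ⟪u, nV t⟫ • nV t + ⟪u, bV t⟫ • bV t := by
  rw [← sub_eq_zero]
  have e1 := e_e t
  have e2 := n_n t
  have e3 := b_b t
  have e4 := e_n t
  have e5 := e_b t
  have e6 := n_b t
  have e7 : ⟪nV t, eV t⟫ = 0 := by rw [real_inner_comm, e4]
  have e8 : ⟪bV t, eV t⟫ = 0 := by rw [real_inner_comm, e5]
  have e9 : ⟪bV t, nV t⟫ = 0 := by rw [real_inner_comm, e6]
  apply frame_zero t <;>
  simp only [inner_sub_left, inner_add_left, inner_smul_left, conj_trivial, e1, e2, e3, e4, e5, e6,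
    e7, e8, e9] <;> ring

lemma crease_to_crease {X Y X' Y' : ℝ → E3} {k k' : ℝ → ℝ} (F : IsFold X Y k)
    (F' : IsFold X' Y' k') {ε₁ C : ℝ} (hC : 0 < C)
    (hb : ∀ t ∈ I0, ∀ s ∈ I0, ∀ v w : ℝ, |v| < ε₁ → |w| < ε₁ →
      |t - s| ≤ C * ‖FM X' Y' t v - FM X' Y' s w‖ ∧ |v - w| ≤ C * ‖FM X' Y' t v - FM X' Y' s w‖)
    {δ : ℝ} (hδ : 0 < δ) {T : E3 ≃ᵢ E3} {A : E3 ≃ₗᵢ[ℝ] E3}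
    (hA : ∀ x y, T x - T y = A (x - y)) (hS : T '' QQ X Y δ ⊆ QQ X' Y' ε₁)
    {t : ℝ} (ht : t ∈ I0) : ∃ s ∈ I0, T (c₀ t) = c₀ s := by
  obtain ⟨s, hs, v, hv, hT⟩ := hS ⟨_, crease_mem hδ ht, rfl⟩
  by_cases hv0 : v = 0
  · refine ⟨s, hs, ?_⟩
    rw [hT, hv0]; simp [FM]
  exfalso
  obtain ⟨N, hN0, hN⟩ := nul_off F' hC hb hs hv hv0
  rw [← hT] at hN
  have hX := lin_tan (tan_map hA hS (tan_X hδ ht)) hN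
  have hY := lin_tan (tan_map hA hS (tan_Y hδ ht)) hN
  obtain ⟨σ, hσ, he⟩ := tan_e (X := X) (Y := Y) hδ ht
  have he := lin_tan (tan_map hA hS he) hN
  have hAs : ∀ u, ⟪N, A u⟫ = ⟪A.symm N, u⟫ := by
    intro u
    rw [← A.inner_map_map (A.symm N) u, A.apply_symm_apply]
  rw [hAs] at hX hY he
  set M := A.symm N with hM
  rw [inner_smul_right, mul_eq_zero, or_iff_right hσ] at he
  rw [inner_neg_right, neg_eq_zero] at hY
  rw [ruling_decomp t (X t)] at hX
  rw [ruling_decomp t (Y t)] at hY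
  obtain ⟨m, hm0, hm⟩ := F.low
  obtain ⟨m1, m2⟩ := hm t ht
  rw [F.kX t ht] at hX
  rw [F.kY t ht] at hY
  simp only [inner_add_right, inner_smul_right, he, mul_zero, zero_add] at hX hY
  have hk := F.k0 t ht
  have h1 : ⟪M, nV t⟫ + k t * ⟪M, bV t⟫ = 0 := by
    have : ⟪X t, nV t⟫ * (⟪M, nV t⟫ + k t * ⟪M, bV t⟫) = 0 := by linear_combination hX
    exact (mul_eq_zero.1 this).resolve_left (by linarith)
  have h2 : ⟪M, nV t⟫ - k t * ⟪M, bV t⟫ = 0 := by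
    have : ⟪Y t, nV t⟫ * (⟪M, nV t⟫ - k t * ⟪M, bV t⟫) = 0 := by linear_combination hY
    exact (mul_eq_zero.1 this).resolve_left (by linarith)
  have h3 : ⟪M, nV t⟫ = 0 := by linarith
  have h4 : ⟪M, bV t⟫ = 0 := by
    have : k t * ⟪M, bV t⟫ = 0 := by linarith
    exact (mul_eq_zero.1 this).resolve_left hk
  have hM0 := frame_zero t M he h3 h4
  rw [hM] at hM0
  exact hN0 (by simpa using hM0)

lemma const_of_sq {u : ℝ → ℝ} {K : ℝ} (hK : 0 ≤ K)
    (h : ∀ s ∈ I0, ∀ t ∈ I0, |u s - u t| ≤ K * |s - t| ^ 2) :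
    ∀ t ∈ I0, u t = u (1/10) := by
  have hd : ∀ t ∈ I0, HasDerivWithinAt u 0 I0 t := by
    intro t ht
    rw [hasDerivWithinAt_iff_isLittleO, Asymptotics.isLittleO_iff]
    intro c hc
    rw [Filter.Eventually, Metric.mem_nhdsWithin_iff]
    refine ⟨c / (K + 1), by positivity, ?_⟩
    rintro s ⟨hs1, hs⟩
    rw [Metric.mem_ball, Real.dist_eq, lt_div_iff₀ (by positivity)] at hs1
    have h1 := h s hs t ht
    simp only [mem_ofPred_eq, smul_zero, sub_zero, Real.norm_eq_abs]
    have := abs_nonneg (s - t)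
    nlinarith
  apply constant_of_derivWithin_zero
  · exact fun t ht => (hd t ht).differentiableWithinAt
  · intro t ht
    have ht' : t ∈ I0 := ⟨ht.1, ht.2.le⟩
    exact (hd t ht').derivWithin (uniqueDiffOn_Icc (by norm_num) t ht')

lemma sigma_cases {σ : ℝ → ℝ} {T : E3 ≃ᵢ E3} (hσ : ∀ t ∈ I0, σ t ∈ I0)
    (hT : ∀ t ∈ I0, T (c₀ t) = c₀ (σ t)) :
    (∀ t ∈ I0, σ t = t) ∨ (∀ t ∈ I0, σ t = 1 - t) := by
  have hl : ∀ s t : ℝ, |(‖c₀ s - c₀ t‖ - |s - t|)| ≤ 2 * |s - t| ^ 2 := by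
    intro s t
    have h1 := taylor s t
    have h2 := abs_norm_sub_norm_le (c₀ s - c₀ t) ((s - t) • eV t)
    rw [norm_smul, norm_e, mul_one, Real.norm_eq_abs] at h2
    linarith
  have hiso : ∀ s ∈ I0, ∀ t ∈ I0, ‖c₀ (σ s) - c₀ (σ t)‖ = ‖c₀ s - c₀ t‖ := by
    intro s hs t ht
    rw [← hT s hs, ← hT t ht, ← dist_eq_norm, ← dist_eq_norm, T.isometry.dist_eq]
  have hd1 : ∀ s ∈ I0, ∀ t ∈ I0, |s - t| ≤ 1 := by
    intro s hs t ht
    obtain ⟨a, b⟩ := I0_bd hs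
    obtain ⟨c, d⟩ := I0_bd ht
    rw [abs_le]; constructor <;> linarith
  have hle : ∀ s ∈ I0, ∀ t ∈ I0, |σ s - σ t| ≤ 6 * |s - t| := by
    intro s hs t ht
    have h1 := chord (σ s) (σ t)
    rw [hiso s hs t ht] at h1
    have h2 := (abs_le.1 (hl s t)).2
    have h3 := hd1 s hs t ht
    nlinarith [abs_nonneg (s - t)]
  have hge : ∀ s ∈ I0, ∀ t ∈ I0, |s - t| ≤ 6 * |σ s - σ t| := by
    intro s hs t ht
    have h1 := chord s t
    rw [← hiso s hs t ht] at h1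
    have h2 := (abs_le.1 (hl (σ s) (σ t))).2
    have h3 := hd1 _ (hσ s hs) _ (hσ t ht)
    nlinarith [abs_nonneg (σ s - σ t)]
  have hsq : ∀ s ∈ I0, ∀ t ∈ I0, |(|σ s - σ t| - |s - t|)| ≤ 74 * |s - t| ^ 2 := by
    intro s hs t ht
    have h1 := abs_le.1 (hl s t)
    have h2 := abs_le.1 (hl (σ s) (σ t))
    rw [hiso s hs t ht] at h2
    have h3 : |σ s - σ t| ^ 2 ≤ (6 * |s - t|) ^ 2 := by
      gcongr
      exact hle s hs t ht
    rw [abs_le]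
    constructor <;> nlinarith
  have hcont : ContinuousOn σ I0 := by
    refine (LipschitzOnWith.of_dist_le_mul (K := 6) ?_).continuousOn
    intro s hs t ht
    rw [Real.dist_eq, Real.dist_eq]
    simpa using hle s hs t ht
  have hinj : InjOn σ I0 := by
    intro s hs t ht hst
    have := hge s hs t ht
    rw [hst, sub_self, abs_zero, mul_zero] at this
    have := abs_nonpos_iff.1 this
    linarith
  have hm1 : (1/10 : ℝ) ∈ I0 := by constructor <;> norm_num
  have hm2 : (9/10 : ℝ) ∈ I0 := by constructor <;> norm_num
  rcases hcont.strictMonoOn_of_injOn_Icc' (by norm_num) hinj with hm | hm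
  · left
    have := const_of_sq (u := fun t => σ t - t) (K := 74) (by norm_num) (by
      intro s hs t ht
      have h := hsq s hs t ht
      have e : σ s - s - (σ t - t) = (σ s - σ t) - (s - t) := by ring
      rw [e]
      rcases lt_trichotomy s t with hst | hst | hst
      · have h2 := hm hs ht hst
        rw [abs_of_neg (by linarith : σ s - σ t < 0), abs_of_neg (by linarith : s - t < 0)] at h
        rw [← abs_neg]
        rw [abs_of_neg (by linarith : s - t < 0)]
        refine le_trans (le_of_eq ?_) h
        congr 1; ring
      · rw [hst]; simp
      · have h2 := hm ht hs hst
        rw [abs_of_pos (by linarith : 0 < σ s - σ t), abs_of_pos (by linarith : 0 < s - t)] at h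
        rw [abs_of_pos (by linarith : 0 < s - t)]
        exact h)
    intro t ht
    have h1 := this t ht
    have h2 := this _ hm2
    have h3 := I0_bd (hσ _ hm1)
    have h4 := I0_bd (hσ _ hm2)
    linarith
  · right
    have := const_of_sq (u := fun t => σ t + t) (K := 74) (by norm_num) (by
      intro s hs t ht
      have h := hsq s hs t ht
      have e : σ s + s - (σ t + t) = (σ s - σ t) + (s - t) := by ring
      rw [e]
      rcases lt_trichotomy s t with hst | hst | hst
      · have h2 := hm hs ht hst
        rw [abs_of_pos (by linarith : 0 < σ s - σ t), abs_of_neg (by linarith : s - t < 0)] at h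
        rw [abs_of_neg (by linarith : s - t < 0)]
        refine le_trans (le_of_eq ?_) h
        congr 1; ring
      · rw [hst]; simp
      · have h2 := hm ht hs hst
        rw [abs_of_neg (by linarith : σ s - σ t < 0), abs_of_pos (by linarith : 0 < s - t)] at h
        rw [← abs_neg]
        rw [abs_of_pos (by linarith : 0 < s - t)]
        refine le_trans (le_of_eq ?_) h
        congr 1; ring)
    intro t ht
    have h1 := this t ht
    have h2 := this _ hm2
    have h3 := I0_bd (hσ _ hm1)
    have h4 := I0_bd (hσ _ hm2)
    linarith

lemma lin_deriv {T : E3 ≃ᵢ E3} {A : E3 ≃ₗᵢ[ℝ] E3} (hA : ∀ x y, T x - T y = A (x - y))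
    (t : ℝ) : HasDerivAt (fun s => T (c₀ s)) (A (eV t)) t := by
  have h1 : HasDerivAt (fun s => A (c₀ s)) (A (eV t)) t :=
    A.toContinuousLinearEquiv.toContinuousLinearMap.hasFDerivAt.comp_hasDerivAt t (hc₀ t)
  have h2 : (fun s => T (c₀ s)) = fun s => A (c₀ s) + T 0 := by
    funext s
    have := hA (c₀ s) 0
    rw [sub_zero] at this
    rw [← this]; abel
  rw [h2]
  exact h1.add_const _

lemma e_inner (s t : ℝ) : ⟪eV s, eV t⟫ = (1 + s * t) ^ 2 / ((1 + s ^ 2) * (1 + t ^ 2)) := by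
  have h1 := ne_of_gt (pos1 t)
  have h2 := ne_of_gt (pos1 s)
  rw [inner3]; simp [eV]; field_simp; linear_combination s * t * s2

lemma T_id {T : E3 ≃ᵢ E3} {A : E3 ≃ₗᵢ[ℝ] E3} (hA : ∀ x y, T x - T y = A (x - y))
    (h : ∀ t ∈ I0, ∃ s ∈ I0, T (c₀ t) = c₀ s) : ∀ x, T x = x := by
  have h' : ∀ t, ∃ s, t ∈ I0 → s ∈ I0 ∧ T (c₀ t) = c₀ s := by
    intro t
    by_cases ht : t ∈ I0
    · obtain ⟨s, hs, hst⟩ := h t ht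
      exact ⟨s, fun _ => ⟨hs, hst⟩⟩
    · exact ⟨0, fun h => absurd h ht⟩
  choose σ hσ using h'
  have hnb : ∀ t : ℝ, 1/10 < t → t < 9/10 → I0 ∈ nhds t := fun t h1 h2 => Icc_mem_nhds h1 h2
  rcases sigma_cases (fun t ht => (hσ t ht).1) (fun t ht => (hσ t ht).2) with hs | hs
  · have hAe : ∀ t : ℝ, 1/10 < t → t < 9/10 → A (eV t) = eV t := by
      intro t h1 h2
      refine (lin_deriv hA t).unique ((hc₀ t).congr_of_eventuallyEq ?_)
      filter_upwards [hnb t h1 h2] with s hs'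
      rw [(hσ s hs').2, hs s hs']
    have hAid : ∀ u, A u = u := by
      intro u
      rw [← sub_eq_zero]
      have key : ∀ t : ℝ, 1/10 < t → t < 9/10 → ⟪A u - u, eV t⟫ = 0 := by
        intro t h1 h2
        have e1 : ⟪A u, A (eV t)⟫ = ⟪u, eV t⟫ := A.inner_map_map _ _
        rw [hAe t h1 h2] at e1
        rw [inner_sub_left, e1, sub_self]
      generalize A u - u = w at key
      have key2 : ∀ t : ℝ, 1/10 < t → t < 9/10 → w 0 + t * (√2 * w 1) + t ^ 2 * w 2 = 0 := by
        intro t h1 h2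
        have h := key t h1 h2
        have hp := ne_of_gt (pos1 t)
        rw [inner3] at h
        simp [eV] at h
        field_simp at h
        linarith
      have k1 := key2 (1/5) (by norm_num) (by norm_num)
      have k2 := key2 (2/5) (by norm_num) (by norm_num)
      have k3 := key2 (3/5) (by norm_num) (by norm_num)
      have hs : √2 ≠ 0 := by positivity
      have w2 : w 2 = 0 := by linarith
      have w0 : w 0 = 0 := by linarith
      have w1 : √2 * w 1 = 0 := by linarith
      have w1 : w 1 = 0 := (mul_eq_zero.1 w1).resolve_left hs
      have hw : w = 0 := by
        ext i
        fin_cases i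
        · exact w0
        · exact w1
        · exact w2
      exact hw
    intro x
    have h1 := hA x (c₀ (1/2))
    have hh : (1/2 : ℝ) ∈ I0 := by constructor <;> norm_num
    rw [hAid, (hσ _ hh).2, hs _ hh] at h1
    exact sub_left_injective h1
  · exfalso
    have hAe : ∀ t : ℝ, 1/10 < t → t < 9/10 → A (eV t) = -eV (1 - t) := by
      intro t h1 h2
      refine (lin_deriv hA t).unique ((hrev (hc₀ (1 - t))).congr_of_eventuallyEq ?_)
      filter_upwards [hnb t h1 h2] with s hs'
      rw [(hσ s hs').2, hs s hs']
    have e1 : ⟪A (eV (1/5)), A (eV (1/2))⟫ = ⟪eV (1/5), eV (1/2)⟫ := A.inner_map_map _ _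
    rw [hAe _ (by norm_num) (by norm_num), hAe _ (by norm_num) (by norm_num), inner_neg_neg,
      e_inner, e_inner] at e1
    norm_num at e1

lemma fold_compare {X' Y' : ℝ → E3} {k' : ℝ → ℝ} (F' : IsFold X' Y' k') :
    ∃ ε₁ > 0, ∀ (X Y : ℝ → E3) (k : ℝ → ℝ), IsFold X Y k → ∀ ε ≤ ε₁, ∀ δ > 0, ∀ T : E3 ≃ᵢ E3,
      T '' QQ X Y δ ⊆ QQ X' Y' ε → ∀ t ∈ I0, k t = k' t := by
  obtain ⟨ε₁, hε₁, C, hC, hb⟩ := bilip F'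
  refine ⟨ε₁, hε₁, ?_⟩
  intro X Y k F ε hε δ hδ T hS t ht
  have hS' : T '' QQ X Y δ ⊆ QQ X' Y' ε₁ := by
    refine hS.trans ?_
    rintro p ⟨t, ht, v, hv, rfl⟩
    exact ⟨t, ht, v, hv.trans_le hε, rfl⟩
  obtain ⟨A, hA⟩ := exists_lin T
  have hid := T_id hA (fun t ht => crease_to_crease F F' hC hb hδ hA hS' ht)
  have hAid : ∀ u, A u = u := by
    intro u
    have := hA u 0
    rw [hid, hid, sub_zero] at this
    exact this.symm
  have h1 := tan_map hA hS' (tan_X (X := X) (Y := Y) hδ ht)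
  rw [hid, hAid] at h1
  have h2 := G_tan (norm_b t) (norm_n t) h1 (nul_crease F' hC hε₁ hb ht)
  obtain ⟨m, hm0, hm⟩ := F.low
  obtain ⟨m1, m2⟩ := hm t ht
  rw [F.kX t ht, abs_of_pos (by linarith)] at h2
  exact mul_right_cancel₀ (by linarith : ⟪X t, nV t⟫ ≠ 0) h2


lemma contDiff_vec3 {f g h : ℝ → ℝ} (hf : ContDiff ℝ 1 f) (hg : ContDiff ℝ 1 g)
    (hh : ContDiff ℝ 1 h) : ContDiff ℝ 1 (fun t => (!₂[f t, g t, h t] : E3)) := by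
  rw [contDiff_euclidean]
  intro i
  fin_cases i
  · exact hf
  · exact hg
  · exact hh

lemma eV_cd : ContDiff ℝ 1 eV := by
  have h : ∀ t : ℝ, 1 + t ^ 2 ≠ 0 := fun t => ne_of_gt (pos1 t)
  refine contDiff_vec3 ?_ ?_ ?_ <;>
    exact ContDiff.div (by fun_prop) (by fun_prop) h

lemma nV_cd : ContDiff ℝ 1 nV := by
  have h : ∀ t : ℝ, 1 + t ^ 2 ≠ 0 := fun t => ne_of_gt (pos1 t)
  refine contDiff_vec3 ?_ ?_ ?_ <;>
    exact ContDiff.div (by fun_prop) (by fun_prop) h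

lemma bV_cd : ContDiff ℝ 1 bV := by
  have h : ∀ t : ℝ, 1 + t ^ 2 ≠ 0 := fun t => ne_of_gt (pos1 t)
  refine contDiff_vec3 ?_ ?_ ?_ <;>
    exact ContDiff.div (by fun_prop) (by fun_prop) h

lemma lip_I0 {X : ℝ → E3} (h : ContDiffOn ℝ 1 X I0) :
    ∃ L : ℝ, 0 ≤ L ∧ ∀ s ∈ I0, ∀ t ∈ I0, ‖X s - X t‖ ≤ L * |s - t| := by
  obtain ⟨K, hK⟩ := LocallyLipschitzOn.exists_lipschitzOnWith_of_compact isCompact_Icc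
    (h.locallyLipschitzOn (convex_Icc _ _))
  refine ⟨K, K.2, fun s hs t ht => ?_⟩
  have := hK.dist_le_mul s hs t ht
  rwa [dist_eq_norm, Real.dist_eq] at this

lemma low_I0 {X : ℝ → E3} (h : ContDiffOn ℝ 1 X I0) (hp : ∀ t ∈ I0, 0 < ⟪X t, nV t⟫) :
    ∃ m : ℝ, 0 < m ∧ ∀ t ∈ I0, m ≤ ⟪X t, nV t⟫ := by
  have hc : ContinuousOn (fun t => ⟪X t, nV t⟫) I0 :=
    h.continuousOn.inner nV_cd.continuous.continuousOn
  obtain ⟨t, ht, hm⟩ := IsCompact.exists_isMinOn isCompact_Icc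
    (nonempty_Icc.2 (by norm_num)) hc
  exact ⟨_, hp t ht, fun s hs => hm hs⟩

lemma mkFold {X Y : ℝ → E3} {k : ℝ → ℝ} (hX : ContDiffOn ℝ 1 X I0) (hY : ContDiffOn ℝ 1 Y I0)
    (nX : ∀ t ∈ I0, ‖X t‖ = 1) (nY : ∀ t ∈ I0, ‖Y t‖ = 1)
    (pX : ∀ t ∈ I0, 0 < ⟪X t, nV t⟫) (pY : ∀ t ∈ I0, 0 < ⟪Y t, nV t⟫)
    (kX : ∀ t ∈ I0, ⟪X t, bV t⟫ = k t * ⟪X t, nV t⟫)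
    (kY : ∀ t ∈ I0, ⟪Y t, bV t⟫ = -k t * ⟪Y t, nV t⟫)
    (k0 : ∀ t ∈ I0, k t ≠ 0) : IsFold X Y k where
  dX := hX.differentiableOn (by norm_num)
  dY := hY.differentiableOn (by norm_num)
  lip := by
    obtain ⟨L, hL0, hL⟩ := lip_I0 hX
    obtain ⟨M, hM0, hM⟩ := lip_I0 hY
    refine ⟨max L M, le_max_of_le_left hL0, fun s hs t ht => ⟨?_, ?_⟩⟩
    · exact (hL s hs t ht).trans (mul_le_mul_of_nonneg_right (le_max_left _ _) (abs_nonneg _))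
    · exact (hM s hs t ht).trans (mul_le_mul_of_nonneg_right (le_max_right _ _) (abs_nonneg _))
  nX := nX
  nY := nY
  low := by
    obtain ⟨m, hm0, hm⟩ := low_I0 hX pX
    obtain ⟨m', hm0', hm'⟩ := low_I0 hY pY
    exact ⟨min m m', lt_min hm0 hm0', fun t ht =>
      ⟨(min_le_left _ _).trans (hm t ht), (min_le_right _ _).trans (hm' t ht)⟩⟩
  kX := kX
  kY := kY
  k0 := k0

lemma ang_formula {b d q : ℝ} (h0 : 0 < b) (h1 : b < π) (hq : 0 < q)
    (h : cos b * q = d * sin b) :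
    sin b = q / √(q ^ 2 + d ^ 2) ∧ cos b = d / √(q ^ 2 + d ^ 2) := by
  have hs := sin_pos_of_pos_of_lt_pi h0 h1
  have hcs := sin_sq_add_cos_sq b
  have hpos : 0 < q ^ 2 + d ^ 2 := by positivity
  have e : √(q ^ 2 + d ^ 2) = q / sin b := by
    rw [Real.sqrt_eq_iff_mul_self_eq hpos.le (by positivity)]
    field_simp
    have : (cos b * q) ^ 2 = (d * sin b) ^ 2 := by rw [h]
    linear_combination q ^ 2 * hcs - this
  rw [e]
  constructor
  · field_simp
  · field_simp; linarith

lemma ang_smooth {b d q : ℝ → ℝ} (hb : ∀ t ∈ I0, 0 < b t ∧ b t < π ∧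
      cos (b t) * q t = d t * sin (b t)) (hq : ∀ t ∈ I0, 0 < q t)
    (cd : ContDiffOn ℝ 1 d I0) (cq : ContDiffOn ℝ 1 q I0) :
    ContDiffOn ℝ 1 (fun t => sin (b t)) I0 ∧ ContDiffOn ℝ 1 (fun t => cos (b t)) I0 := by
  have hpos : ∀ t ∈ I0, q t ^ 2 + d t ^ 2 ≠ 0 := fun t ht => by
    have := hq t ht
    positivity
  have hr : ContDiffOn ℝ 1 (fun t => √(q t ^ 2 + d t ^ 2)) I0 :=
    ((cq.pow 2).add (cd.pow 2)).sqrt hpos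
  have hrn : ∀ t ∈ I0, √(q t ^ 2 + d t ^ 2) ≠ 0 := fun t ht => by
    have := hq t ht
    positivity
  constructor
  · refine (cq.div hr hrn).congr fun t ht => ?_
    obtain ⟨h0, h1, h⟩ := hb t ht
    exact (ang_formula h0 h1 (hq t ht) h).1
  · refine (cd.div hr hrn).congr fun t ht => ?_
    obtain ⟨h0, h1, h⟩ := hb t ht
    exact (ang_formula h0 h1 (hq t ht) h).2

/-- General ruling field. -/
def RR (s1 s2 : ℝ) (a b : ℝ → ℝ) (t : ℝ) : E3 :=
  (s1 * cos (b t)) • eV t + sin (b t) • (cos (a t) • nV t + (s2 * sin (a t)) • bV t)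

lemma RR_cd {s1 s2 : ℝ} {a b : ℝ → ℝ} (ha : ContDiffOn ℝ 1 a I0)
    (hb : ContDiffOn ℝ 1 (fun t => sin (b t)) I0 ∧ ContDiffOn ℝ 1 (fun t => cos (b t)) I0) :
    ContDiffOn ℝ 1 (RR s1 s2 a b) I0 := by
  have he := eV_cd.contDiffOn (s := I0)
  have hn := nV_cd.contDiffOn (s := I0)
  have hbb := bV_cd.contDiffOn (s := I0)
  exact ((contDiffOn_const.mul hb.2).smul he).add
    (hb.1.smul ((ha.cos.smul hn).add ((contDiffOn_const.mul ha.sin).smul hbb)))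

lemma RR_n (s1 s2 : ℝ) (a b : ℝ → ℝ) (t : ℝ) :
    ⟪RR s1 s2 a b t, nV t⟫ = sin (b t) * cos (a t) := by
  simp only [RR, inner_add_left, real_inner_smul_left, e_n, n_n, real_inner_comm (nV t) (bV t), n_b]
  ring

lemma RR_b (s1 s2 : ℝ) (a b : ℝ → ℝ) (t : ℝ) :
    ⟪RR s1 s2 a b t, bV t⟫ = sin (b t) * (s2 * sin (a t)) := by
  simp only [RR, inner_add_left, real_inner_smul_left, e_b, n_b, b_b]
  ring

lemma RR_norm {s1 s2 : ℝ} (h1 : s1 ^ 2 = 1) (h2 : s2 ^ 2 = 1) (a b : ℝ → ℝ) (t : ℝ) :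
    ‖RR s1 s2 a b t‖ = 1 := by
  have e : ⟪RR s1 s2 a b t, RR s1 s2 a b t⟫ = 1 := by
    have r1 : ⟪nV t, eV t⟫ = 0 := by rw [real_inner_comm]; exact e_n t
    have r2 : ⟪bV t, eV t⟫ = 0 := by rw [real_inner_comm]; exact e_b t
    have r3 : ⟪bV t, nV t⟫ = 0 := by rw [real_inner_comm]; exact n_b t
    simp only [RR, inner_add_left, inner_add_right, real_inner_smul_left, real_inner_smul_right,
      r1, r2, r3, e_e, n_n, b_b, e_n, e_b, n_b]
    have ha := sin_sq_add_cos_sq (a t)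
    have hb := sin_sq_add_cos_sq (b t)
    linear_combination (cos (b t)) ^ 2 * h1 + (sin (b t) * sin (a t)) ^ 2 * h2 +
      sin (b t) ^ 2 * ha + hb
  rw [real_inner_self_eq_norm_sq] at e
  nlinarith [norm_nonneg (RR s1 s2 a b t)]

lemma strip_fold {s1 s2 : ℝ} {a b bc q d dc : ℝ → ℝ} (h1 : s1 ^ 2 = 1) (h2 : s2 ^ 2 = 1)
    (ca : ContDiffOn ℝ 1 a I0) (ha : ∀ t ∈ I0, 0 < a t ∧ a t < π / 2)
    (cq : ContDiffOn ℝ 1 q I0) (hq : ∀ t ∈ I0, 0 < q t)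
    (cd : ContDiffOn ℝ 1 d I0) (cdc : ContDiffOn ℝ 1 dc I0)
    (hb : ∀ t ∈ I0, 0 < b t ∧ b t < π ∧ cos (b t) * q t = d t * sin (b t))
    (hbc : ∀ t ∈ I0, 0 < bc t ∧ bc t < π ∧ cos (bc t) * q t = dc t * sin (bc t)) :
    IsFold (RR s1 s2 a b) (RR s1 (-s2) a bc) (fun t => s2 * tan (a t)) := by
  have hcos : ∀ t ∈ I0, 0 < cos (a t) := fun t ht =>
    cos_pos_of_mem_Ioo ⟨by linarith [(ha t ht).1, pi_pos], (ha t ht).2⟩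
  refine mkFold (RR_cd ca (ang_smooth hb hq cd cq)) (RR_cd ca (ang_smooth hbc hq cdc cq))
    (fun t _ => RR_norm h1 h2 _ _ _) (fun t _ => RR_norm h1 (by linarith [neg_sq s2]) _ _ _)
    ?_ ?_ ?_ ?_ ?_
  · intro t ht
    rw [RR_n]
    exact mul_pos (sin_pos_of_pos_of_lt_pi (hb t ht).1 (hb t ht).2.1) (hcos t ht)
  · intro t ht
    rw [RR_n]
    exact mul_pos (sin_pos_of_pos_of_lt_pi (hbc t ht).1 (hbc t ht).2.1) (hcos t ht)
  · intro t ht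
    have := (hcos t ht).ne'
    rw [RR_n, RR_b, tan_eq_sin_div_cos]
    field_simp
  · intro t ht
    have := (hcos t ht).ne'
    rw [RR_n, RR_b, tan_eq_sin_div_cos]
    field_simp
  · intro t ht
    have h3 := tan_pos_of_pos_of_lt_pi_div_two (ha t ht).1 (ha t ht).2
    have h4 : s2 ≠ 0 := by rintro rfl; norm_num at h2
    exact mul_ne_zero h4 h3.ne'


lemma I0_rev {t : ℝ} (h : t ∈ I0) : 1 - t ∈ I0 := by
  obtain ⟨h1, h2⟩ := h
  constructor <;> linarith

lemma α₀_bd {t : ℝ} (h0 : 0 < t) (h1 : t < 1) : 0 < α₀ t ∧ α₀ t < π / 2 := by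
  have := pi_pos
  unfold α₀
  constructor
  · positivity
  · nlinarith

lemma deriv_α₀ (t : ℝ) : deriv α₀ t = π / 24 := by
  have h : HasDerivAt α₀ (π * 1 / 24) t := by
    exact (((hasDerivAt_id t).add_const (10 : ℝ)).const_mul π).div_const 24
  rw [h.deriv]; ring

lemma α₀_cd {n : WithTop ℕ∞} : ContDiff ℝ n α₀ := by
  unfold α₀
  fun_prop

/-- Explicit form of the cosine of the inverse angle. -/
def gst (t : ℝ) : ℝ := cos (α₀ t) * (1 + (1 - t) ^ 2) / (1 + t ^ 2)

lemma α₀st_eq : α₀st = fun t => arccos (gst t) := by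
  funext t
  unfold α₀st gst
  rw [curv_c₀, curv_c₀r]
  have h1 := ne_of_gt (pos1 t)
  have h2 := ne_of_gt (pos1 (1 - t))
  have h3 : √2 ≠ 0 := by positivity
  congr 1
  field_simp

lemma gst_bd {t : ℝ} (h0 : 0 < t) (h1 : t < 1) : 0 < gst t ∧ gst t < 1 := by
  have hp := pos1 t
  have hp2 := pos1 (1 - t)
  obtain ⟨ha, hb⟩ := α₀_bd h0 h1
  have hc : 0 < cos (α₀ t) := cos_pos_of_mem_Ioo ⟨by linarith, hb⟩
  have hpi := pi_lt_d2
  have hpi0 := pi_pos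
  have hle : cos (α₀ t) < 1 / 2 := by
    rw [← cos_pi_div_three]
    apply cos_lt_cos_of_nonneg_of_le_pi_div_two
    · positivity
    · exact hb.le
    · unfold α₀; nlinarith
  unfold gst
  constructor
  · positivity
  · rw [div_lt_one hp]
    nlinarith

lemma gst_cd {n : WithTop ℕ∞} : ContDiff ℝ n gst := by
  unfold gst
  have h : ∀ t : ℝ, 1 + t ^ 2 ≠ 0 := fun t => ne_of_gt (pos1 t)
  exact ((α₀_cd.cos).mul (by fun_prop)).div (by fun_prop) h

lemma α₀st_cd : ContDiffOn ℝ 2 α₀st (Ioo 0 1) := by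
  rw [α₀st_eq]
  intro t ht
  obtain ⟨h1, h2⟩ := gst_bd ht.1 ht.2
  exact ((Real.contDiffAt_arccos (by linarith) (by linarith)).comp t
    gst_cd.contDiffAt).contDiffWithinAt

lemma α₀st_bd {t : ℝ} (h0 : 0 < t) (h1 : t < 1) : 0 < α₀st t ∧ α₀st t < π / 2 := by
  obtain ⟨h2, h3⟩ := gst_bd h0 h1
  rw [α₀st_eq]
  exact ⟨arccos_pos.2 h3, arccos_lt_pi_div_two.2 h2⟩

lemma cos_α₀st {t : ℝ} (h0 : 0 < t) (h1 : t < 1) : cos (α₀st t) = gst t := by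
  obtain ⟨h2, h3⟩ := gst_bd h0 h1
  rw [α₀st_eq]
  exact cos_arccos (by linarith) h3.le

lemma dα₀st_cd : ContDiffOn ℝ 1 (deriv α₀st) (Ioo 0 1) := by
  have h := (α₀st_cd.derivWithin (m := 1) isOpen_Ioo.uniqueDiffOn (by norm_num))
  exact h.congr fun t ht => (derivWithin_of_isOpen isOpen_Ioo ht).symm

lemma rev_cd {f : ℝ → ℝ} (h : ContDiffOn ℝ 1 f (Ioo 0 1)) :
    ContDiffOn ℝ 1 (fun t => f (1 - t)) I0 := by
  refine h.comp (t := Ioo 0 1) (f := fun t => 1 - t) (by fun_prop) ?_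
  rintro t ⟨h1, h2⟩
  constructor <;> simp only <;> linarith

lemma κ_cd : ContDiff ℝ 1 (fun t : ℝ => √2 / (1 + t ^ 2)) := by
  have h : ∀ t : ℝ, 1 + t ^ 2 ≠ 0 := fun t => ne_of_gt (pos1 t)
  exact ContDiff.div (by fun_prop) (by fun_prop) h

lemma fold_f {s : ℝ} (hs : s ^ 2 = 1) {b bc : ℝ → ℝ}
    (hb : ∀ t ∈ I0, 0 < b t ∧ b t < π ∧
      cos (b t) * (curv c₀ t * sin (α₀ t)) = (deriv α₀ t + s * tors c₀ t) * sin (b t))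
    (hbc : ∀ t ∈ I0, 0 < bc t ∧ bc t < π ∧
      cos (bc t) * (curv c₀ t * sin (α₀ t)) = (deriv α₀ t - s * tors c₀ t) * sin (bc t)) :
    IsFold (RR 1 s α₀ b) (RR 1 (-s) α₀ bc) (fun t => s * tan (α₀ t)) := by
  have hbd : ∀ t ∈ I0, 0 < α₀ t ∧ α₀ t < π / 2 := fun t ht =>
    α₀_bd (by linarith [ht.1]) (by linarith [ht.2])
  have hk := κ_cd
  have ha : ContDiff ℝ 1 α₀ := α₀_cd
  have e1 : curv c₀ = fun t => √2 / (1 + t ^ 2) := funext curv_c₀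
  have e2 : tors c₀ = fun t => √2 / (1 + t ^ 2) := funext tors_c₀
  have e3 : deriv α₀ = fun t => π / 24 := funext deriv_α₀
  refine strip_fold (q := fun t => curv c₀ t * sin (α₀ t))
    (d := fun t => deriv α₀ t + s * tors c₀ t) (dc := fun t => deriv α₀ t - s * tors c₀ t)
    (by norm_num) hs ha.contDiffOn hbd ?_ ?_ ?_ ?_ hb hbc
  · rw [e1]; exact (hk.mul ha.sin).contDiffOn
  · intro t ht
    obtain ⟨h0, h1⟩ := hbd t ht
    have := sin_pos_of_pos_of_lt_pi h0 (by linarith)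
    have := pos1 t
    rw [e1]
    positivity
  · rw [e2, e3]; exact (contDiff_const.add (contDiff_const.mul hk)).contDiffOn
  · rw [e2, e3]; exact (contDiff_const.sub (contDiff_const.mul hk)).contDiffOn

lemma fold_fs {s : ℝ} (hs : s ^ 2 = 1) {b bc : ℝ → ℝ}
    (hb : ∀ t ∈ I0, 0 < b t ∧ b t < π ∧
      cos (b t) * (curv c₀r t * sin (α₀st t)) = (deriv α₀st t + s * tors c₀r t) * sin (b t))
    (hbc : ∀ t ∈ I0, 0 < bc t ∧ bc t < π ∧
      cos (bc t) * (curv c₀r t * sin (α₀st t)) = (deriv α₀st t - s * tors c₀r t) * sin (bc t)) :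
    IsFold (RR (-1) (-s) (fun t => α₀st (1 - t)) (fun t => b (1 - t)))
      (RR (-1) s (fun t => α₀st (1 - t)) (fun t => bc (1 - t)))
      (fun t => -s * tan (α₀st (1 - t))) := by
  have hbd : ∀ t ∈ I0, 0 < α₀st (1 - t) ∧ α₀st (1 - t) < π / 2 := fun t ht =>
    α₀st_bd (by linarith [ht.2]) (by linarith [ht.1])
  have hk := κ_cd
  have ha : ContDiffOn ℝ 1 (fun t => α₀st (1 - t)) I0 := rev_cd (α₀st_cd.of_le (by norm_num))
  have hda : ContDiffOn ℝ 1 (fun t => deriv α₀st (1 - t)) I0 := rev_cd dα₀st_cd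
  have e1 : (fun t => curv c₀r (1 - t)) = fun t => √2 / (1 + t ^ 2) := by
    funext t; rw [curv_c₀r, sub_sub_cancel]
  have e2 : (fun t => tors c₀r (1 - t)) = fun t => √2 / (1 + t ^ 2) := by
    funext t; rw [tors_c₀r, sub_sub_cancel]
  have c1 : ContDiffOn ℝ 1 (fun t => curv c₀r (1 - t)) I0 := by rw [e1]; exact hk.contDiffOn
  have c2 : ContDiffOn ℝ 1 (fun t => tors c₀r (1 - t)) I0 := by rw [e2]; exact hk.contDiffOn
  have := strip_fold (s1 := -1) (s2 := -s) (a := fun t => α₀st (1 - t))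
    (b := fun t => b (1 - t)) (bc := fun t => bc (1 - t))
    (q := fun t => curv c₀r (1 - t) * sin (α₀st (1 - t)))
    (d := fun t => deriv α₀st (1 - t) + s * tors c₀r (1 - t))
    (dc := fun t => deriv α₀st (1 - t) - s * tors c₀r (1 - t))
    (by norm_num) (by rw [neg_sq, hs]) ha hbd (c1.mul ha.sin) ?_
    (hda.add (contDiffOn_const.mul c2)) (hda.sub (contDiffOn_const.mul c2))
    (fun t ht => hb _ (I0_rev ht)) (fun t ht => hbc _ (I0_rev ht))
  · rwa [neg_neg] at this
  · intro t ht
    obtain ⟨h0, h1⟩ := hbd t ht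
    have := sin_pos_of_pos_of_lt_pi h0 (by linarith)
    have := pos1 t
    rw [curv_c₀r, sub_sub_cancel]
    positivity

lemma QQ_eq {X Y : ℝ → E3} {Φ : ℝ × ℝ → E3}
    (h : ∀ t v, Φ (t, v) = if 0 ≤ v then c₀ t + v • X t else c₀ t + v • Y t) (δ : ℝ) :
    Φ '' (Icc (1/10 : ℝ) (9/10) ×ˢ Ioo (-δ) δ) = QQ X Y δ := by
  have hh : ∀ t v, Φ (t, v) = FM X Y t v := by
    intro t v
    rw [h]; unfold FM ZZ
    split_ifs <;> rfl
  ext p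
  constructor
  · rintro ⟨⟨t, v⟩, ⟨ht, hv⟩, rfl⟩
    exact ⟨t, ht, v, abs_lt.2 hv, hh t v⟩
  · rintro ⟨t, ht, v, hv, rfl⟩
    exact ⟨(t, v), ⟨ht, abs_lt.1 hv⟩, hh t v⟩

lemma QQ_eq_rev {X Y : ℝ → E3} {Φ : ℝ × ℝ → E3}
    (h : ∀ t v, Φ (t, v) = if 0 ≤ v then c₀r t + v • X t else c₀r t + v • Y t) (δ : ℝ) :
    Φ '' (Icc (1/10 : ℝ) (9/10) ×ˢ Ioo (-δ) δ) =
      QQ (fun t => X (1 - t)) (fun t => Y (1 - t)) δ := by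
  have hh : ∀ t v, Φ (1 - t, v) = FM (fun t => X (1 - t)) (fun t => Y (1 - t)) t v := by
    intro t v
    rw [h]; unfold FM ZZ c₀r
    rw [sub_sub_cancel]
    split_ifs <;> rfl
  ext p
  constructor
  · rintro ⟨⟨t, v⟩, ⟨ht, hv⟩, rfl⟩
    refine ⟨1 - t, I0_rev ht, v, abs_lt.2 hv, ?_⟩
    rw [← hh, sub_sub_cancel]
  · rintro ⟨t, ht, v, hv, rfl⟩
    exact ⟨(1 - t, v), ⟨I0_rev ht, abs_lt.1 hv⟩, hh t v⟩

lemma AB_ne : tan (α₀ (1/10)) ≠ tan (α₀st (1 - 1/10)) := by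
  intro h
  obtain ⟨h1, h2⟩ := α₀_bd (t := 1/10) (by norm_num) (by norm_num)
  obtain ⟨h3, h4⟩ := α₀st_bd (t := 1 - 1/10) (by norm_num) (by norm_num)
  have e : α₀ (1/10) = α₀st (1 - 1/10) :=
    injOn_tan ⟨by linarith, h2⟩ ⟨by linarith, h4⟩ h
  have e2 : cos (α₀ (1/10)) = gst (1 - 1/10) := by
    rw [e, cos_α₀st (by norm_num) (by norm_num)]
  obtain ⟨h5, h6⟩ := α₀_bd (t := 1 - 1/10) (by norm_num) (by norm_num)
  have hc : 0 < cos (α₀ (1 - 1/10)) := cos_pos_of_mem_Ioo ⟨by linarith, h6⟩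
  have hlt : cos (α₀ (1 - 1/10)) < cos (α₀ (1/10)) := by
    apply cos_lt_cos_of_nonneg_of_le_pi_div_two h1.le h6.le
    unfold α₀
    linarith [pi_pos]
  unfold gst at e2
  norm_num at e2 hc hlt
  linarith

/-- Theorem B: for the crease `C₀ = c₀([1/10, 9/10])` with first
angular function `α(t) = π(t+10)/24`, the four curved foldings
`P₁(δ) = φ_f(Ω_δ)`, `P₂(δ) = ψ_f(Ω_δ)`, `P₃(δ) = φ_{f_*}(Ω_δ)`,
`P₄(δ) = ψ_{f_*}(Ω_δ)` with common crease and crease pattern are mutually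
non-congruent: for all sufficiently small `ε > 0`, any `δ ∈ (0, ε]` and any
isometry `T` of `ℝ³`, `T(P_i(δ)) ⊆ P_j(ε)` forces `i = j`. -/
theorem stmt14
    -- the second angular functions of `f` and its dual `f̌`, determined by
    -- `cot β = (α' + τ)/(κ sin α)` and `cot β̌ = (α' - τ)/(κ sin α)`:
    (β βc : ℝ → ℝ)
    (hβ : ∀ t ∈ Icc (1/10 : ℝ) (9/10), 0 < β t ∧ β t < π ∧
      cos (β t) * (curv c₀ t * sin (α₀ t)) =
        (deriv α₀ t + tors c₀ t) * sin (β t))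
    (hβc : ∀ t ∈ Icc (1/10 : ℝ) (9/10), 0 < βc t ∧ βc t < π ∧
      cos (βc t) * (curv c₀ t * sin (α₀ t)) =
        (deriv α₀ t - tors c₀ t) * sin (βc t))
    -- the second angular functions of the inverse `f_*` and its dual `f̌_*`:
    (βs βcs : ℝ → ℝ)
    (hβs : ∀ t ∈ Icc (1/10 : ℝ) (9/10), 0 < βs t ∧ βs t < π ∧
      cos (βs t) * (curv c₀r t * sin (α₀st t)) =
        (deriv α₀st t + tors c₀r t) * sin (βs t))
    (hβcs : ∀ t ∈ Icc (1/10 : ℝ) (9/10), 0 < βcs t ∧ βcs t < π ∧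
      cos (βcs t) * (curv c₀r t * sin (α₀st t)) =
        (deriv α₀st t - tors c₀r t) * sin (βcs t))
    -- the normalized ruling vector fields of the four strips:
    (ξ ξc ξs ξcs : ℝ → E3)
    (hξ : ∀ t, ξ t = cos (β t) • tang c₀ t +
      sin (β t) • (cos (α₀ t) • pnorm c₀ t + sin (α₀ t) • binorm c₀ t))
    (hξc : ∀ t, ξc t = cos (βc t) • tang c₀ t +
      sin (βc t) • (cos (α₀ t) • pnorm c₀ t - sin (α₀ t) • binorm c₀ t))
    (hξs : ∀ t, ξs t = cos (βs t) • tang c₀r t +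
      sin (βs t) • (cos (α₀st t) • pnorm c₀r t + sin (α₀st t) • binorm c₀r t))
    (hξcs : ∀ t, ξcs t = cos (βcs t) • tang c₀r t +
      sin (βcs t) • (cos (α₀st t) • pnorm c₀r t - sin (α₀st t) • binorm c₀r t))
    -- the origami maps `φ_f`, `ψ_f`, `φ_{f_*}`, `ψ_{f_*}`:
    (φ ψ φs ψs : ℝ × ℝ → E3)
    (hφ : ∀ t v, φ (t, v) = if 0 ≤ v then c₀ t + v • ξ t else c₀ t + v • ξc t)
    (hψ : ∀ t v, ψ (t, v) = if 0 ≤ v then c₀ t + v • ξc t else c₀ t + v • ξ t)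
    (hφs : ∀ t v, φs (t, v) =
      if 0 ≤ v then c₀r t + v • ξs t else c₀r t + v • ξcs t)
    (hψs : ∀ t v, ψs (t, v) =
      if 0 ≤ v then c₀r t + v • ξcs t else c₀r t + v • ξs t)
    -- the four curved foldings:
    (P : Fin 4 → ℝ → Set E3)
    (hP : ∀ δ : ℝ,
      P 0 δ = φ '' (Icc (1/10 : ℝ) (9/10) ×ˢ Ioo (-δ) δ) ∧
      P 1 δ = ψ '' (Icc (1/10 : ℝ) (9/10) ×ˢ Ioo (-δ) δ) ∧
      P 2 δ = φs '' (Icc (1/10 : ℝ) (9/10) ×ˢ Ioo (-δ) δ) ∧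
      P 3 δ = ψs '' (Icc (1/10 : ℝ) (9/10) ×ˢ Ioo (-δ) δ)) :
    ∃ ε₀ > (0 : ℝ), ∀ ε : ℝ, 0 < ε → ε ≤ ε₀ → ∀ δ : ℝ, 0 < δ → δ ≤ ε →
      ∀ i j : Fin 4, ∀ T : E3 ≃ᵢ E3, T '' P i δ ⊆ P j ε → i = j := by
  have x0 : ξ = RR 1 1 α₀ β := by
    funext t
    rw [hξ, tang_c₀, pnorm_c₀, binorm_c₀, RR, one_mul, one_mul]
  have x1 : ξc = RR 1 (-1) α₀ βc := by
    funext t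
    rw [hξc, tang_c₀, pnorm_c₀, binorm_c₀, RR, one_mul, sub_eq_add_neg, neg_one_mul, neg_smul]
  have x2 : (fun t => ξs (1 - t)) =
      RR (-1) (-1) (fun t => α₀st (1 - t)) (fun t => βs (1 - t)) := by
    funext t
    simp only [hξs, tang_c₀r, pnorm_c₀r, binorm_c₀r, RR, sub_sub_cancel, neg_one_mul, neg_smul,
      smul_neg]
  have x3 : (fun t => ξcs (1 - t)) =
      RR (-1) 1 (fun t => α₀st (1 - t)) (fun t => βcs (1 - t)) := by
    funext t
    simp only [hξcs, tang_c₀r, pnorm_c₀r, binorm_c₀r, RR, sub_sub_cancel, neg_one_mul, neg_smul,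
      smul_neg, sub_neg_eq_add, one_mul]
  have f0 : IsFold ξ ξc (fun t => 1 * tan (α₀ t)) := by
    rw [x0, x1]
    exact fold_f (by norm_num) (by simpa only [one_mul] using hβ)
      (by simpa only [one_mul] using hβc)
  have f1 : IsFold ξc ξ (fun t => -1 * tan (α₀ t)) := by
    have := fold_f (s := -1) (b := βc) (bc := β) (by norm_num)
      (by simpa only [neg_one_mul, ← sub_eq_add_neg] using hβc)
      (by simpa only [neg_one_mul, sub_neg_eq_add] using hβ)
    rw [neg_neg] at this
    rwa [x0, x1]
  have f2 : IsFold (fun t => ξs (1 - t)) (fun t => ξcs (1 - t))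
      (fun t => -1 * tan (α₀st (1 - t))) := by
    rw [x2, x3]
    exact fold_fs (by norm_num) (by simpa only [one_mul] using hβs)
      (by simpa only [one_mul] using hβcs)
  have f3 : IsFold (fun t => ξcs (1 - t)) (fun t => ξs (1 - t))
      (fun t => 1 * tan (α₀st (1 - t))) := by
    have := fold_fs (s := -1) (b := βcs) (bc := βs) (by norm_num)
      (by simpa only [neg_one_mul, ← sub_eq_add_neg] using hβcs)
      (by simpa only [neg_one_mul, sub_neg_eq_add] using hβs)
    rw [neg_neg] at this
    rwa [x2, x3]
  have p0 : ∀ δ, P 0 δ = QQ ξ ξc δ := fun δ => (hP δ).1.trans (QQ_eq hφ δ)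
  have p1 : ∀ δ, P 1 δ = QQ ξc ξ δ := fun δ => (hP δ).2.1.trans (QQ_eq hψ δ)
  have p2 : ∀ δ, P 2 δ = QQ (fun t => ξs (1 - t)) (fun t => ξcs (1 - t)) δ :=
    fun δ => (hP δ).2.2.1.trans (QQ_eq_rev hφs δ)
  have p3 : ∀ δ, P 3 δ = QQ (fun t => ξcs (1 - t)) (fun t => ξs (1 - t)) δ :=
    fun δ => (hP δ).2.2.2.trans (QQ_eq_rev hψs δ)
  obtain ⟨X, Y, k, hF, hPQ, hk0, hk1, hk2, hk3⟩ : ∃ X Y : Fin 4 → ℝ → E3, ∃ k : Fin 4 → ℝ → ℝ,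
      (∀ i, IsFold (X i) (Y i) (k i)) ∧ (∀ i δ, P i δ = QQ (X i) (Y i) δ) ∧
      k 0 (1/10) = 1 * tan (α₀ (1/10)) ∧ k 1 (1/10) = -1 * tan (α₀ (1/10)) ∧
      k 2 (1/10) = -1 * tan (α₀st (1 - 1/10)) ∧ k 3 (1/10) = 1 * tan (α₀st (1 - 1/10)) := by
    refine ⟨![ξ, ξc, fun t => ξs (1 - t), fun t => ξcs (1 - t)],
      ![ξc, ξ, fun t => ξcs (1 - t), fun t => ξs (1 - t)],
      ![fun t => 1 * tan (α₀ t), fun t => -1 * tan (α₀ t),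
        fun t => -1 * tan (α₀st (1 - t)), fun t => 1 * tan (α₀st (1 - t))],
      ?_, ?_, rfl, rfl, rfl, rfl⟩
    · intro i
      fin_cases i
      · exact f0
      · exact f1
      · exact f2
      · exact f3
    · intro i
      fin_cases i
      · exact p0
      · exact p1
      · exact p2
      · exact p3
  have hcmp := fun j => fold_compare (hF j)
  choose e he hcmp using hcmp
  have hA : 0 < tan (α₀ (1/10)) := by
    obtain ⟨h1, h2⟩ := α₀_bd (t := 1/10) (by norm_num) (by norm_num)
    exact tan_pos_of_pos_of_lt_pi_div_two h1 h2
  have hB : 0 < tan (α₀st (1 - 1/10)) := by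
    obtain ⟨h1, h2⟩ := α₀st_bd (t := 1 - 1/10) (by norm_num) (by norm_num)
    exact tan_pos_of_pos_of_lt_pi_div_two h1 h2
  have hAB := AB_ne
  refine ⟨min (min (e 0) (e 1)) (min (e 2) (e 3)),
    lt_min (lt_min (he 0) (he 1)) (lt_min (he 2) (he 3)), ?_⟩
  intro ε _ hε δ hδ _ i j T hT
  have hεj : ε ≤ e j := by
    simp only [le_min_iff] at hε
    fin_cases j
    · exact hε.1.1
    · exact hε.1.2
    · exact hε.2.1
    · exact hε.2.2
  rw [hPQ, hPQ] at hT
  have hk := hcmp j (X i) (Y i) (k i) (hF i) ε hεj δ hδ T hT (1/10)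
    ⟨le_refl _, by norm_num⟩
  generalize tan (α₀ (1/10)) = A at *
  generalize tan (α₀st (1 - 1/10)) = B at *
  have hinj : ∀ i j : Fin 4, k i (1/10) = k j (1/10) → i = j := by
    intro i j h
    fin_cases i <;> fin_cases j <;> first
      | rfl
      | (exfalso
         simp only [Fin.zero_eta, Fin.mk_one, Fin.reduceFinMk, hk0, hk1, hk2, hk3] at h
         first
           | linarith
           | exact hAB (by linarith))
  exact hinj i j hk
end
end
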